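/- arXiv:1712.02572 — 9 statements merged into one kernel-verified Lean document; each statement's English description precedes it below -/
import Mathlib

section
/- Let N, s be positive integers, z ∈ {1,…,N−1}^s, and let γ_u ≥ 0 be weights for each nonempty subset u ⊆ {1,…,s}. Set γ'_u = γ_u·((58/3)/(4π^4))^{|u|}. Then the quantity S := Σ_{∅≠u⊆{1,…,s}} γ_u · (1/N²) · Σ_{n=0}^{N−1} Σ_{m=0}^{N−1} Π_{j∈u} [ −1 + K₂( φ({n z_j/N}), φ({m z_j/N}) ) ] (which equals the squared worst-case QMC integration error of the tent-transformed rank-1 lattice rule in the weighted non-periodic Sobolev space of second order smoothness) satisfies S ≤ Σ_{∅≠u⊆{1,…,s}} γ'_u · ( Σ_{k∈P^{⊥,u}_{N,z}} Π_{j∈u} 1/k_j² )² ≤ ( Σ_{∅≠u⊆{1,…,s}} (γ'_u)^{1/2} · Σ_{k∈P^{⊥,u}_{N,z}} Π_{j∈u} 1/k_j² )². -/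
/-!
The first inequality is a comparison of cosine coefficients. Since `cos (π p φ(x)) = cos (2π p x)` on
`[0,1]`, the half-period cosine expansion of `K₂ - 1` becomes a full-period expansion at the lattice
points. Its coefficients are explicit: they vanish for `p, q` of different parity, and are
`(π⁴ p² q²)⁻¹` times
* `4 + 2 [p = q]` for `p, q` even,
* `16 + 4/3 - (16/π²) (1/p² + 1/q²) + 2 [p = q]` for `p, q` odd.

So they lie between `0` and `(58/3) (π⁴ p² q²)⁻¹`, the coefficients of the product
`(58/3) B₂({x}) B₂({y})`. Nonnegativity of the coefficients and of the differences is inherited by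
products over `j ∈ u` (telescoping), and the sum over all pairs of lattice points is a zeroth
coefficient, so it can only grow when the kernel is replaced by the product majorant
(`sum_prod_kernel_le`). For the majorant the double sum factors as a square, and the average of
`∏ 2π² B₂({n z_j / N})` over the lattice is exactly the dual lattice sum (`dualSum_eq`).

The second inequality is `∑ a_u² ≤ (∑ a_u)²` for nonnegative `a_u`.
-/

open Real

/-- The tent transformation `φ(x) = 1 - |2x - 1|`. -/
noncomputable def tent (x : ℝ) : ℝ := 1 - |2 * x - 1|

/-- The Bernoulli polynomial `B_n` evaluated at a real `x`. -/
noncomputable def bern (n : ℕ) (x : ℝ) : ℝ := Polynomial.aeval x (Polynomial.bernoulli n)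

/-- The reproducing kernel `K₂(x,y) = 1 + B₁(x)B₁(y) + B₂(x)B₂(y)/4 − B₄(|x−y|)/24`. -/
noncomputable def Ktwo (x y : ℝ) : ℝ :=
  1 + bern 1 x * bern 1 y + bern 2 x * bern 2 y / 4 - bern 4 |x - y| / 24

/-- The sum `Σ_{k ∈ P^{⊥,u}_{N,z}} Π_{j∈u} 1/k_j^α` over the `u`-part of the dual lattice. -/
noncomputable def dualSum (N : ℕ) {s : ℕ} (z : Fin s → ℤ) (u : Finset (Fin s)) (α : ℕ) : ℝ :=
  ∑' k : {k : {j // j ∈ u} → ℤ //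
      (∀ j, k j ≠ 0) ∧ ((N : ℤ) ∣ ∑ j ∈ u.attach, k j * z j.1)},
    ∏ j ∈ u.attach, (1 : ℝ) / ((k.1 j : ℝ)) ^ α

/-! ### Bernoulli polynomials and cosine series -/

theorem bern_one (x : ℝ) : bern 1 x = x - 1 / 2 := by
  simp [bern, Polynomial.bernoulli, Finset.sum_range_succ, Polynomial.aeval_monomial]
  ring

theorem bern_two (x : ℝ) : bern 2 x = x ^ 2 - x + 1 / 6 := by
  simp [bern, Polynomial.bernoulli, Finset.sum_range_succ, Polynomial.aeval_monomial]
  ring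

theorem bern_four (x : ℝ) : bern 4 x = x ^ 4 - 2 * x ^ 3 + x ^ 2 - 1 / 30 := by
  have h3 : _root_.bernoulli 3 = 0 := by
    rw [bernoulli_eq_bernoulli'_of_ne_one (by decide), bernoulli'_three]
  have h4 : _root_.bernoulli 4 = -1 / 30 := by
    rw [bernoulli_eq_bernoulli'_of_ne_one (by decide), bernoulli'_four]
  have c : Nat.choose 4 2 = 6 := by decide
  simp [bern, Polynomial.bernoulli, Finset.sum_range_succ, Polynomial.aeval_monomial, h3, h4, c]
  ring

theorem hasSum_cos_two {t : ℝ} (h0 : 0 ≤ t) (h2 : t ≤ 2) :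
    HasSum (fun p : ℕ => 1 / (p : ℝ) ^ 2 * cos (π * p * t)) (π ^ 2 * bern 2 (t / 2)) := by
  have h := hasSum_one_div_nat_pow_mul_cos (k := 1) (by decide) (x := t / 2)
    ⟨by linarith, by linarith⟩
  rw [Polynomial.eval_map_algebraMap] at h
  convert h using 1
  · ext p; congr 2; ring
  · simp [bern]; left; ring

theorem hasSum_cos_four {t : ℝ} (h0 : 0 ≤ t) (h2 : t ≤ 2) :
    HasSum (fun p : ℕ => 1 / (p : ℝ) ^ 4 * cos (π * p * t)) (-(π ^ 4 / 3) * bern 4 (t / 2)) := by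
  have h := hasSum_one_div_nat_pow_mul_cos (k := 2) (by decide) (x := t / 2)
    ⟨by linarith, by linarith⟩
  rw [Polynomial.eval_map_algebraMap] at h
  convert h using 1
  · ext p; congr 2; ring
  · simp [bern, Nat.factorial]; ring

/-! ### Products of absolutely convergent series; character sums -/

theorem hasSum_prod_fin (n : ℕ) (f : Fin n → ℤ → ℂ) (a : Fin n → ℂ)
    (hn : ∀ i, Summable fun k => ‖f i k‖) (ha : ∀ i, HasSum (f i) (a i)) :
    HasSum (fun k : Fin n → ℤ => ∏ i, f i (k i)) (∏ i, a i) ∧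
      Summable fun k : Fin n → ℤ => ‖∏ i, f i (k i)‖ := by
  induction n with
  | zero =>
    constructor
    · simp [hasSum_unique]
    · exact Summable.of_finite
  | succ n ih =>
    obtain ⟨h1, h2⟩ := ih (fun i => f i.succ) (fun i => a i.succ) (fun i => hn _) (fun i => ha _)
    have h4 : Summable fun x : ℤ × (Fin n → ℤ) => ‖f 0 x.1 * ∏ i : Fin n, f i.succ (x.2 i)‖ :=
      Summable.mul_norm (f := f 0) (g := fun k : Fin n → ℤ => ∏ i : Fin n, f i.succ (k i)) (hn 0) h2
    have h3 : HasSum (fun x : ℤ × (Fin n → ℤ) => f 0 x.1 * ∏ i : Fin n, f i.succ (x.2 i))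
        (a 0 * ∏ i : Fin n, a i.succ) := 
      HasSum.mul (f := f 0) (g := fun k : Fin n → ℤ => ∏ i : Fin n, f i.succ (k i)) (ha 0) h1
        h4.of_norm
    rw [← (Fin.consEquiv (fun _ : Fin (n + 1) => ℤ)).symm.hasSum_iff] at h3
    rw [← (Fin.consEquiv (fun _ : Fin (n + 1) => ℤ)).symm.summable_iff] at h4
    simp only [Fin.prod_univ_succ]
    exact ⟨h3, h4⟩

/-- A finite product of absolutely convergent series over `ℤ` is the sum over the lattice `ℤ^ι` of
the products of the terms. -/
theorem hasSum_prod_pi {ι : Type} [Fintype ι] (f : ι → ℤ → ℂ) (a : ι → ℂ)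
    (hn : ∀ i, Summable fun k => ‖f i k‖) (ha : ∀ i, HasSum (f i) (a i)) :
    HasSum (fun k : ι → ℤ => ∏ i, f i (k i)) (∏ i, a i) := by
  have e := (Fintype.equivFin ι).symm
  have h1 := (hasSum_prod_fin _ (fun i => f (e i)) (fun i => a (e i)) (fun i => hn _)
    (fun i => ha _)).1
  rw [← (e.arrowCongr (Equiv.refl ℤ)).symm.hasSum_iff, e.prod_comp] at h1
  have key : ∀ k : ι → ℤ, ∏ i, f (e i) ((e.arrowCongr (Equiv.refl ℤ)).symm k i)
      = ∏ i, f i (k i) := fun k => by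
    rw [← e.prod_comp (fun i => f i (k i))]; rfl
  simpa only [Function.comp_def, key] using h1

theorem sum_exp_eq (N : ℕ) (hN : 0 < N) (k : ℤ) :
    ∑ n ∈ Finset.range N, Complex.exp (2 * π * Complex.I * k * n / N) =
      if (N : ℤ) ∣ k then (N : ℂ) else 0 := by
  have hN' : (N : ℂ) ≠ 0 := by exact_mod_cast hN.ne'
  set x := Complex.exp (2 * π * Complex.I * k / N) with hx
  have h1 : ∀ n : ℕ, Complex.exp (2 * π * Complex.I * k * n / N) = x ^ n := fun n => by
    rw [hx, ← Complex.exp_nat_mul]; congr 1; ring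
  simp only [h1]
  split_ifs with h
  · obtain ⟨c, rfl⟩ := h
    have : x = 1 := by
      rw [hx, Complex.exp_eq_one_iff]
      exact ⟨c, by push_cast; field_simp⟩
    simp [this]
  · have hx1 : x ≠ 1 := by
      intro h'
      rw [hx, Complex.exp_eq_one_iff] at h'
      obtain ⟨c, hc⟩ := h'
      apply h
      refine ⟨c, ?_⟩
      have := Complex.two_pi_I_ne_zero
      have h3 : (k : ℂ) = N * c := by
        field_simp at hc
        apply mul_left_cancel₀ this
        linear_combination (2 * π * Complex.I) * hc
      exact_mod_cast h3
    have hxN : x ^ N = 1 := by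
      rw [← h1, Complex.exp_eq_one_iff]
      exact ⟨k, by field_simp⟩
    rw [geom_sum_eq hx1, hxN]; simp

theorem sum_cos_nonneg (N : ℕ) (hN : 0 < N) (k : ℤ) :
    0 ≤ ∑ n ∈ Finset.range N, cos (2 * π * k * n / N) := by
  have h := congrArg Complex.re (sum_exp_eq N hN k)
  rw [Complex.re_sum] at h
  have h2 : ∀ n : ℕ, (Complex.exp (2 * π * Complex.I * k * n / N)).re = cos (2 * π * k * n / N) :=
    fun n => by
      rw [show 2 * (π : ℂ) * Complex.I * k * n / N = ((2 * π * k * n / N : ℝ) : ℂ) * Complex.I by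
        push_cast; ring, Complex.exp_ofReal_mul_I_re]
  simp only [h2] at h
  rw [h]
  split_ifs <;> simp

/-! ### Functions on the grid with nonnegative cosine coefficients -/

/-- All discrete cosine coefficients of `f`, viewed on `{0,…,N-1}²`, are nonnegative. Only the values
of `f` at arguments below `N` matter. -/
def CosPos (N : ℕ) (f : ℕ → ℕ → ℝ) : Prop :=
  ∀ k l : ℤ, 0 ≤ ∑ n ∈ Finset.range N, ∑ m ∈ Finset.range N,
    f n m * (cos (2 * π * k * n / N) * cos (2 * π * l * m / N))

/-- Multiplication by `h` preserves nonnegativity of the cosine coefficients. The set of such `h` is a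
convex cone, closed under products and convergent sums, that contains the cosines; working with
multipliers gives closure under products without any coefficient convolution. -/
def CosMult (N : ℕ) (h : ℕ → ℕ → ℝ) : Prop :=
  ∀ f, CosPos N f → CosPos N (fun n m => f n m * h n m)

section

variable {N : ℕ}

theorem CosPos.one (hN : 0 < N) : CosPos N (fun _ _ => 1) := by
  intro k l
  have := mul_nonneg (sum_cos_nonneg N hN k) (sum_cos_nonneg N hN l)
  rw [Finset.sum_mul_sum] at this
  simpa using this

theorem CosPos.add {f g : ℕ → ℕ → ℝ} (hf : CosPos N f) (hg : CosPos N g) :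
    CosPos N (fun n m => f n m + g n m) := by
  intro k l
  have := add_nonneg (hf k l) (hg k l)
  simpa only [← Finset.sum_add_distrib, ← add_mul] using this

theorem CosPos.const_mul {f : ℕ → ℕ → ℝ} (hf : CosPos N f) {c : ℝ} (hc : 0 ≤ c) :
    CosPos N (fun n m => c * f n m) := by
  intro k l
  have := mul_nonneg hc (hf k l)
  simpa only [Finset.mul_sum, ← mul_assoc] using this

theorem CosPos.hasSum {ι : Type} {f : ι → ℕ → ℕ → ℝ} {F : ℕ → ℕ → ℝ} (hf : ∀ i, CosPos N (f i))
    (hF : ∀ n m, HasSum (fun i => f i n m) (F n m)) : CosPos N F := by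
  intro k l
  have h := hasSum_sum fun n (_ : n ∈ Finset.range N) => hasSum_sum
    fun m (_ : m ∈ Finset.range N) =>
      (hF n m).mul_right (cos (2 * π * k * n / N) * cos (2 * π * l * m / N))
  exact h.nonneg fun i => hf i k l

theorem CosMult.add {g h : ℕ → ℕ → ℝ} (hg : CosMult N g) (hh : CosMult N h) :
    CosMult N (fun n m => g n m + h n m) := fun f hf => by
  simpa only [mul_add] using (hg f hf).add (hh f hf)

theorem CosMult.const_mul {h : ℕ → ℕ → ℝ} (hh : CosMult N h) {c : ℝ} (hc : 0 ≤ c) :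
    CosMult N (fun n m => c * h n m) := fun f hf => by
  simpa only [mul_left_comm] using (hh f hf).const_mul hc

theorem CosMult.mul {g h : ℕ → ℕ → ℝ} (hg : CosMult N g) (hh : CosMult N h) :
    CosMult N (fun n m => g n m * h n m) := fun f hf => by
  simpa only [mul_assoc] using hh _ (hg f hf)

theorem CosMult.hasSum {ι : Type} {h : ι → ℕ → ℕ → ℝ} {H : ℕ → ℕ → ℝ}
    (hh : ∀ i, CosMult N (h i)) (hH : ∀ n m, HasSum (fun i => h i n m) (H n m)) :
    CosMult N H := fun f hf =>
  CosPos.hasSum (fun i => hh i f hf) fun n m => (hH n m).mul_left _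

/-- The tent-transformed coordinate `φ({n z / N})` of the `n`-th lattice point. -/
noncomputable def node (N : ℕ) (z : ℤ) (n : ℕ) : ℝ :=
  tent (Int.fract ((n : ℝ) * (z : ℝ) / (N : ℝ)))

theorem node_mem (z : ℤ) (n : ℕ) : 0 ≤ node N z n ∧ node N z n ≤ 1 := by
  unfold node tent
  have h0 := Int.fract_nonneg ((n : ℝ) * (z : ℝ) / (N : ℝ))
  have h1 := (Int.fract_lt_one ((n : ℝ) * (z : ℝ) / (N : ℝ))).le
  constructor
  · have : |2 * Int.fract ((n : ℝ) * (z : ℝ) / (N : ℝ)) - 1| ≤ 1 :=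
      abs_le.2 ⟨by linarith, by linarith⟩
    linarith
  · linarith [abs_nonneg (2 * Int.fract ((n : ℝ) * (z : ℝ) / (N : ℝ)) - 1)]

/-- The tent transformation turns the half-period cosine `cos (π p ·)` into the full-period one. -/
theorem cos_node (z : ℤ) (p n : ℕ) :
    cos (π * p * node N z n) = cos (2 * π * (p * z : ℤ) * n / N) := by
  have h : cos (π * p * node N z n) =
      cos (2 * π * p * Int.fract ((n : ℝ) * (z : ℝ) / (N : ℝ))) := by
    unfold node tent
    rcases abs_cases (2 * Int.fract ((n : ℝ) * (z : ℝ) / (N : ℝ)) - 1) with h | h <;> rw [h.1]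
    · rw [← cos_nat_mul_two_pi_sub _ p]; congr 1; ring
    · congr 1; ring
  rw [h, ← Int.self_sub_floor, ← cos_sub_int_mul_two_pi (2 * π * (p * z : ℤ) * n / N)
    (p * ⌊(n : ℝ) * (z : ℝ) / (N : ℝ)⌋)]
  congr 1
  push_cast
  ring

/-- By the product-to-sum formula, multiplying by a cosine averages two cosine coefficients. -/
theorem CosMult.cos_fst (k : ℤ) : CosMult N (fun n _ => cos (2 * π * k * n / N)) := by
  intro f hf a b
  have h := mul_nonneg (by norm_num : (0 : ℝ) ≤ 1 / 2) (add_nonneg (hf (a + k) b) (hf (a - k) b))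
  rw [← Finset.sum_add_distrib, Finset.mul_sum] at h
  refine h.trans_eq (Finset.sum_congr rfl fun n _ => ?_)
  rw [← Finset.sum_add_distrib, Finset.mul_sum]
  refine Finset.sum_congr rfl fun m _ => ?_
  have e1 : 2 * π * ((a + k : ℤ) : ℝ) * n / N = 2 * π * a * n / N + 2 * π * k * n / N := by
    push_cast; ring
  have e2 : 2 * π * ((a - k : ℤ) : ℝ) * n / N = 2 * π * a * n / N - 2 * π * k * n / N := by
    push_cast; ring
  rw [e1, e2, cos_add, cos_sub]
  ring

theorem CosMult.cos_snd (k : ℤ) : CosMult N (fun _ m => cos (2 * π * k * m / N)) := by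
  intro f hf a b
  have h := mul_nonneg (by norm_num : (0 : ℝ) ≤ 1 / 2) (add_nonneg (hf a (b + k)) (hf a (b - k)))
  rw [← Finset.sum_add_distrib, Finset.mul_sum] at h
  refine h.trans_eq (Finset.sum_congr rfl fun n _ => ?_)
  rw [← Finset.sum_add_distrib, Finset.mul_sum]
  refine Finset.sum_congr rfl fun m _ => ?_
  have e1 : 2 * π * ((b + k : ℤ) : ℝ) * m / N = 2 * π * b * m / N + 2 * π * k * m / N := by
    push_cast; ring
  have e2 : 2 * π * ((b - k : ℤ) : ℝ) * m / N = 2 * π * b * m / N - 2 * π * k * m / N := by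
    push_cast; ring
  rw [e1, e2, cos_add, cos_sub]
  ring

/-- A cosine series with nonnegative coefficients, evaluated at the first lattice coordinate, is a
multiplier. -/
theorem CosMult.series_fst {c : ℕ → ℝ} {Φ : ℝ → ℝ} (hc : ∀ p, 0 ≤ c p)
    (hΦ : ∀ t, 0 ≤ t → t ≤ 1 → HasSum (fun p : ℕ => c p * cos (π * p * t)) (Φ t)) (z : ℤ) :
    CosMult N (fun n _ => Φ (node N z n)) := by
  refine CosMult.hasSum (h := fun (p : ℕ) n _ => c p * cos (π * p * node N z n)) (fun p => ?_)
    fun n m => hΦ _ (node_mem z n).1 (node_mem z n).2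
  simp only [cos_node]
  exact (CosMult.cos_fst _).const_mul (hc p)

theorem CosMult.series_snd {c : ℕ → ℝ} {Φ : ℝ → ℝ} (hc : ∀ p, 0 ≤ c p)
    (hΦ : ∀ t, 0 ≤ t → t ≤ 1 → HasSum (fun p : ℕ => c p * cos (π * p * t)) (Φ t)) (z : ℤ) :
    CosMult N (fun _ m => Φ (node N z m)) := by
  refine CosMult.hasSum (h := fun (p : ℕ) _ m => c p * cos (π * p * node N z m)) (fun p => ?_)
    fun n m => hΦ _ (node_mem z m).1 (node_mem z m).2
  simp only [cos_node]
  exact (CosMult.cos_snd _).const_mul (hc p)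

/-! ### The half-period cosine expansion of the kernel -/

/-- The indicator of the even integers. -/
noncomputable def evn (p : ℕ) : ℝ := (1 + (-1) ^ p) / 2

/-- The indicator of the odd integers. -/
noncomputable def od (p : ℕ) : ℝ := (1 - (-1) ^ p) / 2

theorem evn_od_cases (p : ℕ) : (evn p = 1 ∧ od p = 0) ∨ (evn p = 0 ∧ od p = 1) := by
  unfold evn od
  rcases neg_one_pow_eq_or ℝ p with h | h <;> rw [h] <;> norm_num

theorem cos_reflect (p : ℕ) (t : ℝ) : cos (π * p * (1 - t)) = (-1) ^ p * cos (π * p * t) := by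
  rw [← cos_nat_mul_pi_sub]; congr 1; ring

/-- The sum of `cos (π p t) / p²` over odd `p`, in closed form on `[0,1]`; see `hasSum_serA`. -/
noncomputable def serA (t : ℝ) : ℝ := π ^ 2 / 2 * (bern 2 (t / 2) - bern 2 ((1 - t) / 2))

/-- The sum of `cos (π p t) / p²` over even `p > 0`, in closed form on `[0,1]`; see `hasSum_serC`. -/
noncomputable def serC (t : ℝ) : ℝ := π ^ 2 / 2 * (bern 2 (t / 2) + bern 2 ((1 - t) / 2))

/-- The sum of `cos (π p t) / p⁴` over odd `p`, in closed form on `[0,1]`; see `hasSum_serD`. -/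
noncomputable def serD (t : ℝ) : ℝ := -(π ^ 4 / 6) * (bern 4 (t / 2) - bern 4 ((1 - t) / 2))

theorem hasSum_serA {t : ℝ} (h0 : 0 ≤ t) (h1 : t ≤ 1) :
    HasSum (fun p : ℕ => od p / (p : ℝ) ^ 2 * cos (π * p * t)) (serA t) := by
  convert! ((hasSum_cos_two h0 (by linarith)).sub (hasSum_cos_two (t := 1 - t) (by linarith)
    (by linarith))).mul_left (1 / 2) using 1
  · ext p; rw [cos_reflect, od]; ring
  · rw [serA]; ring

theorem hasSum_serC {t : ℝ} (h0 : 0 ≤ t) (h1 : t ≤ 1) :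
    HasSum (fun p : ℕ => evn p / (p : ℝ) ^ 2 * cos (π * p * t)) (serC t) := by
  convert! ((hasSum_cos_two h0 (by linarith)).add (hasSum_cos_two (t := 1 - t) (by linarith)
    (by linarith))).mul_left (1 / 2) using 1
  · ext p; rw [cos_reflect, evn]; ring
  · rw [serC]; ring

theorem hasSum_serD {t : ℝ} (h0 : 0 ≤ t) (h1 : t ≤ 1) :
    HasSum (fun p : ℕ => od p / (p : ℝ) ^ 4 * cos (π * p * t)) (serD t) := by
  convert! ((hasSum_cos_four h0 (by linarith)).sub (hasSum_cos_four (t := 1 - t) (by linarith)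
    (by linarith))).mul_left (1 / 2) using 1
  · ext p; rw [cos_reflect, od]; ring
  · rw [serD]; ring

/-- The diagonal double cosine series: the sum of `cos (π p x) cos (π p y) / p⁴` over `p ≥ 1`, in closed
form on `[0,1]²`; see `hasSum_serDiag`. -/
noncomputable def serDiag (x y : ℝ) : ℝ :=
  -(π ^ 4 / 6) * (bern 4 (|x - y| / 2) + bern 4 ((x + y) / 2))

theorem hasSum_serDiag {x y : ℝ} (hx0 : 0 ≤ x) (hx1 : x ≤ 1) (hy0 : 0 ≤ y) (hy1 : y ≤ 1) :
    HasSum (fun p : ℕ => 1 / (p : ℝ) ^ 4 * (cos (π * p * x) * cos (π * p * y)))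
      (serDiag x y) := by
  have hxy : |x - y| ≤ 2 := abs_le.2 ⟨by linarith, by linarith⟩
  convert! ((hasSum_cos_four (abs_nonneg (x - y)) hxy).add (hasSum_cos_four (t := x + y)
    (by linarith) (by linarith))).mul_left (1 / 2) using 1
  · ext p
    have e1 : cos (π * p * |x - y|) = cos (π * p * x - π * p * y) := by
      rcases abs_cases (x - y) with h | h <;> rw [h.1]
      · rw [mul_sub]
      · rw [← cos_neg]; congr 1; ring
    rw [e1, mul_add (π * (p : ℝ)) x y, cos_add, cos_sub]; ring
  · rw [serDiag]; ring

/-- The double cosine expansion of the kernel, grouped so that each summand has nonnegative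
coefficients. All series being known in closed form, this is a polynomial identity. -/
theorem kernel_eq (x y : ℝ) :
    -1 + Ktwo x y = 1 / π ^ 4 * ((52 / 3 - 32 / π ^ 2) * (serA x * serA y)
      + 16 / π ^ 2 * (serA x * (serA y - serD y))
      + 16 / π ^ 2 * ((serA x - serD x) * serA y) + 4 * (serC x * serC y)
      + 2 * serDiag x y) := by
  have hπ := pi_ne_zero
  unfold Ktwo serA serC serD serDiag
  simp only [bern_one, bern_two, bern_four]
  rcases abs_cases (x - y) with h | h <;> rw [h.1] <;> field_simp <;> ring

/-- `π² B₂({nz/N})` is the sum of `cos (2π p n z / N) / p²` over all `p ≥ 1`, hence the odd plus the even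
part of the series at the tent-transformed node. -/
theorem bern_two_fract (z : ℤ) (n : ℕ) :
    π ^ 2 * bern 2 (Int.fract ((n : ℝ) * (z : ℝ) / (N : ℝ))) =
      serA (node N z n) + serC (node N z n) := by
  unfold node tent serA serC
  simp only [bern_two]
  rcases abs_cases (2 * Int.fract ((n : ℝ) * (z : ℝ) / (N : ℝ)) - 1) with h | h <;> rw [h.1] <;>
    ring

theorem od_nonneg (p : ℕ) : 0 ≤ od p := by rcases evn_od_cases p with h | h <;> rw [h.2]; norm_num

theorem evn_nonneg (p : ℕ) : 0 ≤ evn p := by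
  rcases evn_od_cases p with h | h <;> rw [h.1]; norm_num

theorem odd_coeff_sub_nonneg (p : ℕ) : 0 ≤ od p / (p : ℝ) ^ 2 - od p / (p : ℝ) ^ 4 := by
  rcases Nat.eq_zero_or_pos p with rfl | hp
  · simp
  · have h1 : (1 : ℝ) ≤ p := by exact_mod_cast hp
    exact sub_nonneg.2 (div_le_div_of_nonneg_left (od_nonneg p) (by positivity)
      (pow_le_pow_right₀ h1 (by norm_num)))

/-- All cosine coefficients of the kernel `K₂ - 1` at the tent-transformed nodes are nonnegative. -/
theorem mult_kernel (z : ℤ) :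
    CosMult N (fun n m => -1 + Ktwo (node N z n) (node N z m)) := by
  simp only [kernel_eq]
  have cA : ∀ p : ℕ, 0 ≤ od p / (p : ℝ) ^ 2 := fun p => div_nonneg (od_nonneg p) (by positivity)
  have cC : ∀ p : ℕ, 0 ≤ evn p / (p : ℝ) ^ 2 := fun p => div_nonneg (evn_nonneg p) (by positivity)
  have hA1 := CosMult.series_fst (N := N) cA (fun t => hasSum_serA) z
  have hA2 := CosMult.series_snd (N := N) cA (fun t => hasSum_serA) z
  have hC1 := CosMult.series_fst (N := N) cC (fun t => hasSum_serC) z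
  have hC2 := CosMult.series_snd (N := N) cC (fun t => hasSum_serC) z
  have hAD : ∀ t, 0 ≤ t → t ≤ 1 → HasSum (fun p : ℕ => (od p / (p : ℝ) ^ 2 - od p / (p : ℝ) ^ 4) *
      cos (π * p * t)) (serA t - serD t) := fun t h0 h1 => by
    simpa only [sub_mul] using (hasSum_serA h0 h1).sub (hasSum_serD h0 h1)
  have hE1 := CosMult.series_fst (N := N) (Φ := fun t => serA t - serD t)
    odd_coeff_sub_nonneg hAD z
  have hE2 := CosMult.series_snd (N := N) (Φ := fun t => serA t - serD t)
    odd_coeff_sub_nonneg hAD z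
  have hΔ : CosMult N (fun n m => serDiag (node N z n) (node N z m)) := by
    refine CosMult.hasSum (h := fun (p : ℕ) n m => 1 / (p : ℝ) ^ 4 *
      (cos (π * p * node N z n) * cos (π * p * node N z m))) (fun p => ?_) fun n m =>
        hasSum_serDiag (node_mem z n).1 (node_mem z n).2 (node_mem z m).1 (node_mem z m).2
    simp only [cos_node]
    exact ((CosMult.cos_fst _).mul (CosMult.cos_snd _)).const_mul (by positivity)
  have hpi : 0 ≤ 52 / 3 - 32 / π ^ 2 := by
    have : 32 / π ^ 2 ≤ 32 / 9 := by
      apply div_le_div_of_nonneg_left (by norm_num) (by norm_num)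
      nlinarith [pi_gt_three]
    linarith
  exact (((((hA1.mul hA2).const_mul hpi).add ((hA1.mul hE2).const_mul (by positivity))).add
    ((hE1.mul hA2).const_mul (by positivity))).add ((hC1.mul hC2).const_mul (by norm_num))).add
    (hΔ.const_mul (by norm_num)) |>.const_mul (by positivity)

/-- The function is the double series of `cos (π p x) cos (π q y) / (p² q²)` over pairs `p ≠ q` of equal
parity. It is summed over `p` last, with the term `q = p` removed from the inner series. -/
theorem mult_offDiag (z : ℤ) :
    CosMult N (fun n m => serA (node N z n) * serA (node N z m) +
      serC (node N z n) * serC (node N z m) - serDiag (node N z n) (node N z m)) := by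
  refine CosMult.hasSum (h := fun (p : ℕ) n m => 1 / (p : ℝ) ^ 2 * (cos (π * p * node N z n) *
    (od p * serA (node N z m) + evn p * serC (node N z m)
      - 1 / (p : ℝ) ^ 2 * cos (π * p * node N z m)))) (fun p => ?_) fun n m => ?_
  · have h2 : CosMult N (fun _ m => od p * serA (node N z m) + evn p * serC (node N z m)
        - 1 / (p : ℝ) ^ 2 * cos (π * p * node N z m)) := by
      refine CosMult.series_snd (c := fun q => od p * (od q / (q : ℝ) ^ 2)
        + evn p * (evn q / (q : ℝ) ^ 2) - if q = p then 1 / (p : ℝ) ^ 2 else 0)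
        (Φ := fun t => od p * serA t + evn p * serC t - 1 / (p : ℝ) ^ 2 * cos (π * p * t))
        (fun q => ?_) (fun t h0 h1 => ?_) z
      · have hq : (0 : ℝ) ≤ 1 / (q : ℝ) ^ 2 := by positivity
        split_ifs with h
        · subst h
          rcases evn_od_cases q with h | h <;> rw [h.1, h.2] <;> simp
        · have := mul_nonneg (od_nonneg p) (div_nonneg (od_nonneg q) (sq_nonneg (q : ℝ)))
          have := mul_nonneg (evn_nonneg p) (div_nonneg (evn_nonneg q) (sq_nonneg (q : ℝ)))
          linarith
      · convert! (((hasSum_serA h0 h1).mul_left (od p)).add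
          ((hasSum_serC h0 h1).mul_left (evn p))).sub
          (hasSum_ite_eq p (1 / (p : ℝ) ^ 2 * cos (π * p * t))) using 1
        ext q
        split_ifs with h
        · subst h; ring
        · ring
    have h1 : CosMult N (fun n _ => cos (π * p * node N z n)) := by
      simp only [cos_node]; exact CosMult.cos_fst _
    exact (h1.mul h2).const_mul (by positivity)
  · obtain ⟨hx0, hx1⟩ := node_mem (N := N) z n
    obtain ⟨hy0, hy1⟩ := node_mem (N := N) z m
    convert! (((hasSum_serA hx0 hx1).mul_right (serA (node N z m))).add
      ((hasSum_serC hx0 hx1).mul_right (serC (node N z m)))).sub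
      (hasSum_serDiag hx0 hx1 hy0 hy1) using 1
    ext p
    ring

/-- The coefficient bound: each cosine coefficient of the kernel is at most that of
`(58/3) B₂({x}) B₂({y})`. The constant `58/3 = 16 + 4/3 + 2` comes from the odd diagonal. -/
theorem mult_majorant_sub (z : ℤ) :
    CosMult N (fun n m => 58 / 3 * (bern 2 (Int.fract ((n : ℝ) * (z : ℝ) / (N : ℝ))) *
      bern 2 (Int.fract ((m : ℝ) * (z : ℝ) / (N : ℝ)))) -
        (-1 + Ktwo (node N z n) (node N z m))) := by
  have cA : ∀ p : ℕ, 0 ≤ od p / (p : ℝ) ^ 2 := fun p => div_nonneg (od_nonneg p) (by positivity)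
  have cC : ∀ p : ℕ, 0 ≤ evn p / (p : ℝ) ^ 2 := fun p => div_nonneg (evn_nonneg p) (by positivity)
  have cD : ∀ p : ℕ, 0 ≤ od p / (p : ℝ) ^ 4 := fun p => div_nonneg (od_nonneg p) (by positivity)
  have hA1 := CosMult.series_fst (N := N) cA (fun t => hasSum_serA) z
  have hA2 := CosMult.series_snd (N := N) cA (fun t => hasSum_serA) z
  have hC1 := CosMult.series_fst (N := N) cC (fun t => hasSum_serC) z
  have hC2 := CosMult.series_snd (N := N) cC (fun t => hasSum_serC) z
  have hD1 := CosMult.series_fst (N := N) cD (fun t => hasSum_serD) z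
  have hD2 := CosMult.series_snd (N := N) cD (fun t => hasSum_serD) z
  have h := ((((hA1.mul hD2).add (hD1.mul hA2)).const_mul
    (c := 16 / π ^ 2) (by positivity)).add
    (((hA1.mul hC2).add (hC1.mul hA2)).const_mul (c := 58 / 3) (by norm_num))).add
    (((hC1.mul hC2).const_mul (c := 58 / 3 - 6) (by norm_num)).add
    ((mult_offDiag z).const_mul (c := 2) (by norm_num))) |>.const_mul
      (c := 1 / π ^ 4) (by positivity)
  convert h using 3 with n m
  have hπ := pi_ne_zero
  have e : ∀ n : ℕ, bern 2 (Int.fract ((n : ℝ) * (z : ℝ) / (N : ℝ))) =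
      (serA (node N z n) + serC (node N z n)) / π ^ 2 := fun n => by
    rw [← bern_two_fract]; field_simp
  rw [e, e, kernel_eq]
  field_simp
  ring

/-- The coefficientwise bound passes to products, and the grid sum is the zeroth coefficient. -/
theorem sum_prod_kernel_le (hN : 0 < N) {s : ℕ} (z : Fin s → ℤ) (u : Finset (Fin s)) :
    ∑ n ∈ Finset.range N, ∑ m ∈ Finset.range N,
        ∏ j ∈ u, (-1 + Ktwo (node N (z j) n) (node N (z j) m)) ≤
      ∑ n ∈ Finset.range N, ∑ m ∈ Finset.range N,
        ∏ j ∈ u, (58 / 3 * (bern 2 (Int.fract ((n : ℝ) * (z j : ℝ) / (N : ℝ))) *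
          bern 2 (Int.fract ((m : ℝ) * (z j : ℝ) / (N : ℝ))))) := by
  set F : Fin s → ℕ → ℕ → ℝ := fun j n m => -1 + Ktwo (node N (z j) n) (node N (z j) m)
  set G : Fin s → ℕ → ℕ → ℝ := fun j n m =>
    58 / 3 * (bern 2 (Int.fract ((n : ℝ) * (z j : ℝ) / (N : ℝ))) *
          bern 2 (Int.fract ((m : ℝ) * (z j : ℝ) / (N : ℝ))))
  have hF : ∀ j, CosMult N (F j) := fun j => mult_kernel (z j)
  have hGF : ∀ j, CosMult N (fun n m => G j n m - F j n m) := fun j => mult_majorant_sub (z j)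
  have key : CosPos N (fun n m => ∏ j ∈ u, F j n m) ∧
      CosPos N (fun n m => ∏ j ∈ u, G j n m - ∏ j ∈ u, F j n m) := by
    induction u using Finset.induction_on with
    | empty =>
      refine ⟨by simpa using CosPos.one hN, fun k l => by simp⟩
    | insert j u hj ih =>
      simp only [Finset.prod_insert hj]
      refine ⟨by simpa only [mul_comm] using hF j _ ih.1, ?_⟩
      -- `G_j ∏ G - F_j ∏ F = (F_j + (G_j - F_j)) (∏ G - ∏ F) + (G_j - F_j) ∏ F`
      convert (((hF j).add (hGF j)) _ ih.2).add (hGF j _ ih.1) using 3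
      ring
  have h := key.2 0 0
  simp only [Int.cast_zero, mul_zero, zero_mul, zero_div, cos_zero, mul_one,
    Finset.sum_sub_distrib] at h
  linarith

/-! ### The dual lattice sum -/

/-- The Fourier series of the periodic `2π² B₂`. The term `k = 0` contributes `1 / 0 ^ 2 = 0`. -/
theorem hasSum_int_exp (N : ℕ) (z : ℤ) (n : ℕ) :
    HasSum (fun k : ℤ => 1 / (k : ℂ) ^ 2 * Complex.exp (2 * π * Complex.I * (k * z : ℤ) * n / N))
      ((2 * π ^ 2 * bern 2 (Int.fract ((n : ℝ) * (z : ℝ) / (N : ℝ))) : ℝ) : ℂ) := by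
  have h := hasSum_one_div_pow_mul_fourier_mul_bernoulliFun (k := 2) le_rfl
    (x := Int.fract ((n : ℝ) * (z : ℝ) / (N : ℝ))) ⟨Int.fract_nonneg _, (Int.fract_lt_one _).le⟩
  convert! h using 1
  · ext k
    rw [fourier_coe_apply, ← Int.self_sub_floor]
    congr 1
    rw [Complex.exp_eq_exp_iff_exists_int]
    refine ⟨k * ⌊(n : ℝ) * (z : ℝ) / (N : ℝ)⌋, ?_⟩
    push_cast
    ring
  · rw [bernoulliFun, Polynomial.eval_map_algebraMap, bern, mul_pow, Complex.I_sq]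
    push_cast
    simp
    left
    ring

/-- The dual lattice sum is the lattice-rule average of the product of the periodic functions
`2π² B₂({·})`: averaging the characters over the lattice points selects the dual lattice. Frequencies
with a zero coordinate drop out because `1 / 0 ^ 2 = 0`. -/
theorem dualSum_eq (hN : 0 < N) {s : ℕ} (z : Fin s → ℤ) (u : Finset (Fin s)) :
    dualSum N z u 2 = 1 / N * ∑ n ∈ Finset.range N,
      ∏ j ∈ u, (2 * π ^ 2 * bern 2 (Int.fract ((n : ℝ) * (z j : ℝ) / (N : ℝ)))) := by
  have hN' : (N : ℂ) ≠ 0 := by exact_mod_cast hN.ne'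
  have hsum : Summable fun k : ℤ => ‖1 / (k : ℂ) ^ 2‖ := by
    have := Real.summable_one_div_int_pow.2 (by norm_num : 1 < 2)
    simpa [Complex.norm_pow] using this
  have h1 : ∀ n : ℕ, HasSum (fun k : {j // j ∈ u} → ℤ => ∏ j, (1 / (k j : ℂ) ^ 2 *
      Complex.exp (2 * π * Complex.I * (k j * z j.1 : ℤ) * n / N)))
      (∏ j : {j // j ∈ u},
        ((2 * π ^ 2 * bern 2 (Int.fract ((n : ℝ) * (z j.1 : ℝ) / (N : ℝ))) : ℝ) : ℂ)) := fun n => by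
    refine hasSum_prod_pi (fun (j : {j // j ∈ u}) (k : ℤ) => 1 / (k : ℂ) ^ 2 *
      Complex.exp (2 * π * Complex.I * (k * z j.1 : ℤ) * n / N)) _ (fun j => ?_)
      fun j => hasSum_int_exp N (z j.1) n
    refine hsum.congr fun k => ?_
    rw [norm_mul, show 2 * (π : ℂ) * Complex.I * (k * z j.1 : ℤ) * n / N
      = ((2 * π * (k * z j.1 : ℤ) * n / N : ℝ) : ℂ) * Complex.I by push_cast; ring,
      Complex.norm_exp_ofReal_mul_I, mul_one]
  have h2 := (hasSum_sum fun n (_ : n ∈ Finset.range N) => h1 n).mul_left (1 / (N : ℂ))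
  have h3 : ∀ k : {j // j ∈ u} → ℤ, 1 / (N : ℂ) * ∑ n ∈ Finset.range N, ∏ j, (1 / (k j : ℂ) ^ 2 *
      Complex.exp (2 * π * Complex.I * (k j * z j.1 : ℤ) * n / N)) =
      ((Set.indicator {k : {j // j ∈ u} → ℤ |
        (∀ j, k j ≠ 0) ∧ ((N : ℤ) ∣ ∑ j ∈ u.attach, k j * z j.1)}
        (fun k => ∏ j ∈ u.attach, (1 : ℝ) / ((k j : ℝ)) ^ 2) k : ℝ) : ℂ) := fun k => by
    simp only [Finset.prod_mul_distrib, ← Finset.mul_sum, ← Complex.exp_sum]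
    have e : ∀ n : ℕ, ∑ j : {j // j ∈ u}, 2 * (π : ℂ) * Complex.I * (k j * z j.1 : ℤ) * n / N =
        2 * π * Complex.I * (∑ j ∈ u.attach, k j * z j.1 : ℤ) * n / N := fun n => by
      rw [← Finset.sum_div, ← Finset.sum_mul, ← Finset.mul_sum, Int.cast_sum]; rfl
    simp only [e, sum_exp_eq N hN]
    by_cases hk : ∀ j, k j ≠ 0
    · by_cases hd : (N : ℤ) ∣ ∑ j ∈ u.attach, k j * z j.1
      · rw [if_pos hd, Set.indicator_of_mem (by exact ⟨hk, hd⟩)]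
        push_cast
        rw [mul_comm, mul_assoc, mul_one_div_cancel hN', mul_one]
        rfl
      · rw [if_neg hd, Set.indicator_of_notMem (fun h => hd h.2)]
        simp
    · rw [Set.indicator_of_notMem (fun h => hk h.1)]
      push Not at hk
      obtain ⟨j, hj⟩ := hk
      rw [Finset.prod_eq_zero (Finset.mem_univ j) (by simp [hj])]
      simp
  simp only [h3] at h2
  have h4 : dualSum N z u 2 = ∑' k, Set.indicator {k : {j // j ∈ u} → ℤ |
        (∀ j, k j ≠ 0) ∧ ((N : ℤ) ∣ ∑ j ∈ u.attach, k j * z j.1)}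
        (fun k => ∏ j ∈ u.attach, (1 : ℝ) / ((k j : ℝ)) ^ 2) k := by
    rw [← tsum_subtype]; rfl
  have h5 : (1 / (N : ℂ)) * ∑ n ∈ Finset.range N, ∏ j : {j // j ∈ u},
      ((2 * π ^ 2 * bern 2 (Int.fract ((n : ℝ) * (z j.1 : ℝ) / (N : ℝ))) : ℝ) : ℂ) =
      ((1 / N * ∑ n ∈ Finset.range N,
      ∏ j ∈ u, (2 * π ^ 2 * bern 2 (Int.fract ((n : ℝ) * (z j : ℝ) / (N : ℝ)))) : ℝ) : ℂ) := by
    rw [Complex.ofReal_mul, Complex.ofReal_sum]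
    congr 1
    · push_cast; rfl
    · refine Finset.sum_congr rfl fun n _ => ?_
      rw [← Complex.ofReal_prod]
      exact congrArg _ (Finset.prod_coe_sort u
        (fun j => 2 * π ^ 2 * bern 2 (Int.fract ((n : ℝ) * (z j : ℝ) / (N : ℝ)))))
  rw [h5] at h2
  rw [h4]
  exact (Complex.hasSum_ofReal.1 h2).tsum_eq

theorem dualSum_nonneg (N : ℕ) {s : ℕ} (z : Fin s → ℤ) (u : Finset (Fin s)) :
    0 ≤ dualSum N z u 2 :=
  tsum_nonneg fun _ => Finset.prod_nonneg fun _ _ => by positivity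

theorem majorant_eq (hN : 0 < N) {s : ℕ} (z : Fin s → ℤ) (u : Finset (Fin s)) :
    ((58 / 3) / (4 * π ^ 4)) ^ u.card * (dualSum N z u 2) ^ 2 = 1 / (N : ℝ) ^ 2 *
      ∑ n ∈ Finset.range N, ∑ m ∈ Finset.range N,
        ∏ j ∈ u, (58 / 3 * (bern 2 (Int.fract ((n : ℝ) * (z j : ℝ) / (N : ℝ))) *
          bern 2 (Int.fract ((m : ℝ) * (z j : ℝ) / (N : ℝ))))) := by
  have hπ := pi_ne_zero
  rw [dualSum_eq hN, mul_pow, sq (∑ n ∈ Finset.range N, _), Finset.sum_mul_sum, one_div_pow,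
    mul_left_comm]
  congr 1
  rw [Finset.mul_sum]
  refine Finset.sum_congr rfl fun n _ => ?_
  rw [Finset.mul_sum]
  refine Finset.sum_congr rfl fun m _ => ?_
  rw [← Finset.prod_const, ← Finset.prod_mul_distrib, ← Finset.prod_mul_distrib]
  refine Finset.prod_congr rfl fun j _ => ?_
  field_simp
  ring

end

theorem stmt0 (N s : ℕ) (hN : 0 < N) (hs : 0 < s)
    (z : Fin s → ℤ) (hz : ∀ j, 1 ≤ z j ∧ z j ≤ (N : ℤ) - 1)
    (γ : Finset (Fin s) → ℝ) (hγ : ∀ u : Finset (Fin s), u.Nonempty → 0 ≤ γ u) :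
    (∑ u ∈ Finset.univ.filter (fun u : Finset (Fin s) => u.Nonempty),
        γ u * (1 / (N : ℝ) ^ 2) *
          ∑ n ∈ Finset.range N, ∑ m ∈ Finset.range N,
            ∏ j ∈ u,
              (-1 + Ktwo (tent (Int.fract ((n : ℝ) * (z j : ℝ) / (N : ℝ))))
                (tent (Int.fract ((m : ℝ) * (z j : ℝ) / (N : ℝ)))))
      ≤ ∑ u ∈ Finset.univ.filter (fun u : Finset (Fin s) => u.Nonempty),
          (γ u * ((58 / 3) / (4 * π ^ 4)) ^ u.card) * (dualSum N z u 2) ^ 2)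
    ∧
    (∑ u ∈ Finset.univ.filter (fun u : Finset (Fin s) => u.Nonempty),
        (γ u * ((58 / 3) / (4 * π ^ 4)) ^ u.card) * (dualSum N z u 2) ^ 2
      ≤ (∑ u ∈ Finset.univ.filter (fun u : Finset (Fin s) => u.Nonempty),
          Real.sqrt (γ u * ((58 / 3) / (4 * π ^ 4)) ^ u.card) * dualSum N z u 2) ^ 2) := by
  constructor
  · refine Finset.sum_le_sum fun u hu => ?_
    have hu' : u.Nonempty := (Finset.mem_filter.1 hu).2
    rw [mul_assoc, mul_assoc, majorant_eq hN]
    exact mul_le_mul_of_nonneg_left (mul_le_mul_of_nonneg_left (sum_prod_kernel_le hN z u)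
      (by positivity)) (hγ u hu')
  · refine le_trans (Finset.sum_le_sum fun u hu => ?_)
      (Finset.sum_sq_le_sq_sum_of_nonneg fun u _ =>
        mul_nonneg (Real.sqrt_nonneg _) (dualSum_nonneg N z u))
    have hu' : u.Nonempty := (Finset.mem_filter.1 hu).2
    rw [mul_pow, Real.sq_sqrt (mul_nonneg (hγ u hu') (by positivity))]
end

section
/- For every positive integer k and every x ∈ [0,1], sin(2πk·φ(x)) = (8/π)·Σ_{ℓ=1, ℓ odd}^∞ ( k/(4k² − ℓ²) )·cos(2πℓx), where the series over odd positive integers ℓ converges absolutely. -/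
/-!
On `[0, 1]` the function `x ↦ sin (2πk φ(x))` is continuous, takes equal values at the endpoints
and is symmetric about `1/2`, so it descends to a continuous function on the circle `ℝ/ℤ`. By the
symmetry its `n`-th Fourier coefficient is
`∫₀^{1/2} sin (4πkx) · 2 cos (2πnx) dx = S (2k + n) + S (2k - n)`, where
`S m = ∫₀^{1/2} sin (2πmx) dx` equals `1/(πm)` for odd `m` and `0` for even `m`. Hence the
coefficient is `4k / (π (4k² - n²))` for odd `n` and vanishes for even `n` (`fourierCoeff_tentFun`).
These coefficients are `O(1/n²)`, hence summable, so the Fourier series converges absolutely to the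
function at every point; pairing `n` with `-n` gives the cosine series.
-/

open Real

/-- The integral `S m` is `1/(πm)` for odd `m` and `0` for even `m`. -/
lemma integral_sin_half (m : ℤ) :
    ∫ x in (0 : ℝ)..(1 / 2), Real.sin (2 * π * m * x) = if Odd m then 1 / (π * m) else 0 := by
  by_cases hm : m = 0
  · subst hm; simp
  have hmR : (m : ℝ) ≠ 0 := by exact_mod_cast hm
  have hc : 2 * π * (m : ℝ) ≠ 0 := by positivity
  rw [intervalIntegral.integral_comp_mul_left (fun y => Real.sin y) hc, integral_sin]
  have h1 : 2 * π * (m : ℝ) * (1 / 2) = m * π := by ring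
  rw [h1, Real.cos_int_mul_pi]
  split_ifs with ho
  · rw [ho.neg_one_zpow]
    simp
    field_simp
    norm_num
  · rw [(Int.not_odd_iff_even.mp ho).neg_one_zpow]
    simp

/-- The function `x ↦ sin (2πk φ(x))`, with complex values. -/
noncomputable def tentFun (k : ℕ) (x : ℝ) : ℂ := (Real.sin (2 * π * (k : ℝ) * tent x) : ℝ)

lemma continuous_tentFun (k : ℕ) : Continuous (tentFun k) := by
  unfold tentFun tent
  fun_prop

lemma tentFun_symm (k : ℕ) (x : ℝ) : tentFun k (1 - x) = tentFun k x := by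
  have h : |2 * (1 - x) - 1| = |2 * x - 1| := by
    rw [← abs_neg]; congr 1; ring
  simp only [tentFun, tent, h]

/-- The Fourier coefficients of `x ↦ sin (2πk φ(x))` on the unit circle. -/
noncomputable def tentCoeff (k : ℕ) (n : ℤ) : ℝ :=
  if Odd n then 4 * (k : ℝ) / (π * (4 * (k : ℝ) ^ 2 - (n : ℝ) ^ 2)) else 0

/-- As `n` is odd, `4k² - n²` is a nonzero integer. -/
lemma one_le_abs_sub (k : ℕ) {n : ℤ} (hn : Odd n) :
    1 ≤ |4 * (k : ℝ) ^ 2 - (n : ℝ) ^ 2| := by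
  have h : (4 * (k : ℤ) ^ 2 - n ^ 2) ≠ 0 := by
    intro h
    have h2 : Odd (n ^ 2) := hn.pow
    rw [Int.odd_iff] at h2
    omega
  have := Int.one_le_abs h
  exact_mod_cast this

lemma fourierCoeffOn_tentFun (k : ℕ) (n : ℤ) :
    fourierCoeffOn (zero_lt_one' ℝ) (tentFun k) n = tentCoeff k n := by
  have hcont : ∀ m : ℤ, Continuous fun x : ℝ =>
      fourier m (x : AddCircle (1 - 0 : ℝ)) • tentFun k x := fun m =>
    ((map_continuous (fourier m)).comp (AddCircle.continuous_mk' _)).smul (continuous_tentFun k)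
  rw [fourierCoeffOn_eq_integral]
  rw [← intervalIntegral.integral_add_adjacent_intervals (b := 1 / 2)
    ((hcont _).intervalIntegrable _ _) ((hcont _).intervalIntegrable _ _)]
  -- reflect the half `[1/2, 1]` onto `[0, 1/2]`
  have hrefl : ∫ x in (1 / 2 : ℝ)..1, fourier (-n) (x : AddCircle (1 - 0 : ℝ)) • tentFun k x
      = ∫ x in (0 : ℝ)..(1 / 2), fourier n (x : AddCircle (1 - 0 : ℝ)) • tentFun k x := by
    have h := intervalIntegral.integral_comp_sub_left (a := (0 : ℝ)) (b := 1 / 2)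
      (fun x : ℝ => fourier (-n) (x : AddCircle (1 - 0 : ℝ)) • tentFun k x) 1
    -- only the endpoints are normalized: `1 - 0` also occurs as the period of the circle
    refine Eq.trans (by congr 1 <;> norm_num) (h.symm.trans ?_)
    refine intervalIntegral.integral_congr fun x _ => ?_
    simp only [tentFun_symm]
    congr 1
    rw [fourier_coe_apply, fourier_coe_apply, Complex.exp_eq_exp_iff_exists_int]
    refine ⟨-n, ?_⟩
    push_cast
    ring
  rw [hrefl, ← intervalIntegral.integral_add
    ((hcont _).intervalIntegrable _ _) ((hcont _).intervalIntegrable _ _)]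
  have hint : ∫ x in (0 : ℝ)..(1 / 2), (fourier (-n) (x : AddCircle (1 - 0 : ℝ)) • tentFun k x
        + fourier n (x : AddCircle (1 - 0 : ℝ)) • tentFun k x)
      = ((∫ x in (0 : ℝ)..(1 / 2), (Real.sin (2 * π * (2 * k + n : ℤ) * x)
        + Real.sin (2 * π * (2 * k - n : ℤ) * x)) : ℝ) : ℂ) := by
    rw [← intervalIntegral.integral_ofReal]
    refine intervalIntegral.integral_congr fun x hx => ?_
    rw [Set.uIcc_of_le (by norm_num)] at hx
    have ht : tent x = 2 * x := by
      rw [tent, abs_of_nonpos (by linarith [hx.2])]; ring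
    have he : fourier (-n) (x : AddCircle (1 - 0 : ℝ)) + fourier n (x : AddCircle (1 - 0 : ℝ))
        = ((2 * Real.cos (2 * π * n * x) : ℝ) : ℂ) := by
      rw [fourier_coe_apply, fourier_coe_apply]
      push_cast
      rw [Complex.two_cos]
      rw [add_comm]
      congr 2 <;> ring
    rw [← add_smul, he, tentFun, ht, smul_eq_mul, ← Complex.ofReal_mul]
    congr 1
    have e1 : 2 * π * ((2 * k + n : ℤ) : ℝ) * x
        = 2 * π * k * (2 * x) + 2 * π * n * x := by push_cast; ring
    have e2 : 2 * π * ((2 * k - n : ℤ) : ℝ) * x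
        = 2 * π * k * (2 * x) - 2 * π * n * x := by push_cast; ring
    rw [e1, e2, Real.sin_add, Real.sin_sub]
    ring
  rw [hint, intervalIntegral.integral_add
    (Continuous.intervalIntegrable (by fun_prop) _ _)
    (Continuous.intervalIntegrable (by fun_prop) _ _), integral_sin_half, integral_sin_half]
  have o1 : Odd (2 * (k : ℤ) + n) ↔ Odd n := by grind
  have o2 : Odd (2 * (k : ℤ) - n) ↔ Odd n := by grind
  simp only [o1, o2, tentCoeff]
  split_ifs with hn
  · have h := one_le_abs_sub k hn
    have h0 : (4 * (k : ℝ) ^ 2 - (n : ℝ) ^ 2) ≠ 0 := by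
      intro h0; rw [h0] at h; norm_num at h
    have hf : (2 * (k : ℝ) + n) * (2 * k - n) = 4 * (k : ℝ) ^ 2 - (n : ℝ) ^ 2 := by ring
    have hp : (2 * (k : ℝ) + n) ≠ 0 := by rintro h; rw [h] at hf; simp at hf; exact h0 hf.symm
    have hq : (2 * (k : ℝ) - n) ≠ 0 := by rintro h; rw [h] at hf; simp at hf; exact h0 hf.symm
    have hsum : 1 / (π * ((2 * k + n : ℤ) : ℝ)) + 1 / (π * ((2 * k - n : ℤ) : ℝ))
        = 4 * (k : ℝ) / (π * (4 * (k : ℝ) ^ 2 - (n : ℝ) ^ 2)) := by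
      rw [← hf]
      push_cast
      field_simp
      ring
    rw [hsum]
    simp
  · simp

lemma summable_tentCoeff (k : ℕ) : Summable (tentCoeff k) := by
  have hs : Summable fun n : ℤ => 4 * (k : ℝ) / π * (4 * (k : ℝ) ^ 2 + 1) * (1 / (n : ℝ) ^ 2) :=
    (Real.summable_one_div_int_pow.mpr one_lt_two).mul_left _
  refine Summable.of_norm_bounded hs fun n => ?_
  unfold tentCoeff
  split_ifs with hn
  · have h := one_le_abs_sub k hn
    have hn0 : (n : ℝ) ≠ 0 := by
      have : n ≠ 0 := by rintro rfl; simp at hn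
      exact_mod_cast this
    have hn2 : 0 < (n : ℝ) ^ 2 := by positivity
    -- `n² ≤ 4k² + |4k² - n²| ≤ (4k² + 1) |4k² - n²|`
    have hb : (n : ℝ) ^ 2 ≤ (4 * (k : ℝ) ^ 2 + 1) * |4 * (k : ℝ) ^ 2 - (n : ℝ) ^ 2| := by
      have := neg_abs_le (4 * (k : ℝ) ^ 2 - (n : ℝ) ^ 2)
      nlinarith [sq_nonneg (k : ℝ)]
    rw [Real.norm_eq_abs, abs_div, abs_mul, abs_mul, abs_of_pos pi_pos, abs_of_nonneg
      (show (0 : ℝ) ≤ 4 by norm_num), abs_of_nonneg (Nat.cast_nonneg k : (0 : ℝ) ≤ k)]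
    have hA : 0 < |4 * (k : ℝ) ^ 2 - (n : ℝ) ^ 2| := by linarith
    rw [mul_one_div, div_mul_eq_mul_div, div_div, div_le_div_iff₀ (by positivity) (by positivity)]
    have : 0 ≤ 4 * (k : ℝ) * π := by positivity
    nlinarith [mul_le_mul_of_nonneg_left hb this]
  · simp; positivity

lemma fourierCoeff_tentFun (k : ℕ) (n : ℤ) :
    fourierCoeff (AddCircle.liftIco (1 : ℝ) 0 (tentFun k)) n = tentCoeff k n := by
  rw [fourierCoeff_liftIco_eq, ← fourierCoeffOn_tentFun]
  simp only [zero_add]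

lemma hasSum_tent_Ico (k : ℕ) {x : ℝ} (hx : x ∈ Set.Ico (0 : ℝ) 1) :
    HasSum (fun n : ℤ => (tentCoeff k n : ℂ) * fourier n (x : AddCircle (1 : ℝ))) (tentFun k x) := by
  have hends : tentFun k 0 = tentFun k (0 + 1) := by
    rw [← tentFun_symm]; norm_num
  let F : C(AddCircle (1 : ℝ), ℂ) := ⟨AddCircle.liftIco 1 0 (tentFun k),
    AddCircle.liftIco_continuous hends (continuous_tentFun k).continuousOn⟩
  have hF : fourierCoeff F = fun n => (tentCoeff k n : ℂ) := funext (fourierCoeff_tentFun k)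
  have h := has_pointwise_sum_fourier_series_of_summable (f := F)
    (by rw [hF]; exact Complex.ofRealCLM.summable (summable_tentCoeff k)) (x : AddCircle (1 : ℝ))
  rw [hF] at h
  have hv : F (x : AddCircle (1 : ℝ)) = tentFun k x :=
    AddCircle.liftIco_coe_apply (p := 1) (a := 0) (f := tentFun k) (by simpa using hx)
  rw [hv] at h
  simpa only [smul_eq_mul] using h

lemma hasSum_tent_odd (k : ℕ) {x : ℝ} (hx : x ∈ Set.Ico (0 : ℝ) 1) :
    HasSum (fun l : {l : ℕ // Odd l} =>
      (8 / π) * ((k : ℝ) / (4 * (k : ℝ) ^ 2 - ((l : ℕ) : ℝ) ^ 2)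
        * Real.cos (2 * π * ((l : ℕ) : ℝ) * x)))
      (Real.sin (2 * π * (k : ℝ) * tent x)) := by
  have h := (hasSum_tent_Ico k hx).nat_add_neg
  have h0 : tentCoeff k 0 = 0 := by simp [tentCoeff]
  have hneg : ∀ n : ℤ, tentCoeff k (-n) = tentCoeff k n := by
    intro n; simp [tentCoeff]
  have hterm : ∀ n : ℕ, (tentCoeff k n : ℂ) * fourier (n : ℤ) (x : AddCircle (1 : ℝ))
      + (tentCoeff k (-n) : ℂ) * fourier (-n : ℤ) (x : AddCircle (1 : ℝ))
      = ((tentCoeff k n * (2 * Real.cos (2 * π * n * x)) : ℝ) : ℂ) := by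
    intro n
    rw [hneg, ← mul_add, fourier_coe_apply, fourier_coe_apply]
    push_cast
    rw [Complex.two_cos]
    congr 3 <;> ring
  simp only [hterm, h0, Complex.ofReal_zero, zero_mul, add_zero, tentFun] at h
  rw [Complex.hasSum_ofReal] at h
  have hsupp : Function.support (fun n : ℕ => tentCoeff k n * (2 * Real.cos (2 * π * n * x)))
      ⊆ {l : ℕ | Odd l} := by
    intro n hn
    by_contra ho
    refine hn ?_
    have : ¬ Odd (n : ℤ) := by simpa using ho
    simp only [tentCoeff, if_neg this, zero_mul]
  rw [← hasSum_subtype_iff_of_support_subset hsupp] at h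
  convert! h using 1
  funext l
  have ho : Odd ((l : ℕ) : ℤ) := by exact_mod_cast l.2
  simp only [Function.comp_apply, tentCoeff, if_pos ho, Int.cast_natCast]
  rw [← div_div]
  ring

theorem stmt4 (k : ℕ) (hk : 0 < k) (x : ℝ) (hx : x ∈ Set.Icc (0 : ℝ) 1) :
    Summable (fun l : {l : ℕ // Odd l} =>
      |(k : ℝ) / (4 * (k : ℝ) ^ 2 - ((l : ℕ) : ℝ) ^ 2) * Real.cos (2 * π * ((l : ℕ) : ℝ) * x)|) ∧
    Real.sin (2 * π * (k : ℝ) * tent x) =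
      (8 / π) * ∑' l : {l : ℕ // Odd l},
        (k : ℝ) / (4 * (k : ℝ) ^ 2 - ((l : ℕ) : ℝ) ^ 2) * Real.cos (2 * π * ((l : ℕ) : ℝ) * x) := by
  have key : HasSum (fun l : {l : ℕ // Odd l} =>
      (8 / π) * ((k : ℝ) / (4 * (k : ℝ) ^ 2 - ((l : ℕ) : ℝ) ^ 2)
        * Real.cos (2 * π * ((l : ℕ) : ℝ) * x)))
      (Real.sin (2 * π * (k : ℝ) * tent x)) := by
    rcases hx.2.lt_or_eq with h1 | rfl
    · exact hasSum_tent_odd k ⟨hx.1, h1⟩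
    · -- both sides take the same values at `1` and at `0`
      have h := hasSum_tent_odd k (x := 0) (by simp)
      have ht : tent 0 = tent 1 := by norm_num [tent]
      have hc : ∀ l : ℕ, Real.cos (2 * π * l * 1) = Real.cos (2 * π * l * 0) := by
        intro l
        rw [mul_one, mul_zero, Real.cos_zero, mul_comm, Real.cos_nat_mul_two_pi]
      simpa only [hc, ht] using h
  have h8 : (8 / π : ℝ) ≠ 0 := by positivity
  exact ⟨((summable_mul_left_iff h8).mp key.summable).abs, by rw [← tsum_mul_left, key.tsum_eq]⟩
end

section
/- For all positive integers k and all nonnegative integers ℓ: (i) ∫₀¹ sin(2πk·φ(x))·sin(2πℓx) dx = 0; (ii) if ℓ is even (including ℓ = 0), then ∫₀¹ sin(2πk·φ(x))·cos(2πℓx) dx = 0; (iii) if ℓ is odd, then ∫₀¹ sin(2πk·φ(x))·cos(2πℓx) dx = (4/π)·k/(4k² − ℓ²). -/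
/-!
The tent map is symmetric under `x ↦ 1 - x`. Against this symmetry `sin (2πℓx)` is odd, which
gives the vanishing of the sine coefficients, and `cos (2πℓx)` is even, so that the cosine
coefficient is twice the integral over `[0, 1/2]`, where `φ(x) = 2x` (`cos_coeff_eq_half`).
For even `ℓ` the remaining integrand `sin (4πkx) cos (2πℓx)` is odd under `x ↦ 1/2 - x`, so its
integral vanishes; this covers the resonant case `ℓ = 2k` as well. For odd `ℓ` one has `ℓ ≠ 2k`,
and the product-to-sum formula provides an explicit antiderivative.
-/

open Real MeasureTheory

lemma integral_eq_zero_of_reflect (f : ℝ → ℝ) (a : ℝ) (h : ∀ x, f (a - x) = -f x) :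
    ∫ x in (0 : ℝ)..a, f x = 0 := by
  have h1 := intervalIntegral.integral_comp_sub_left (a := 0) (b := a) f a
  simp only [h, sub_self, sub_zero, intervalIntegral.integral_neg] at h1
  linarith

lemma tent_one_sub (x : ℝ) : tent (1 - x) = tent x := by
  unfold tent
  rw [show 2 * (1 - x) - 1 = -(2 * x - 1) by ring, abs_neg]

lemma tent_of_le_half {x : ℝ} (hx : x ≤ 1 / 2) : tent x = 2 * x := by
  unfold tent
  rw [abs_of_nonpos (by linarith)]
  ring

lemma continuous_tent : Continuous tent := by
  unfold tent
  fun_prop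

lemma sin_two_pi_nat_reflect (l : ℕ) (x : ℝ) :
    Real.sin (2 * π * (l : ℝ) * (1 - x)) = -Real.sin (2 * π * (l : ℝ) * x) := by
  rw [show 2 * π * (l : ℝ) * (1 - x) = (l : ℝ) * (2 * π) - 2 * π * (l : ℝ) * x by ring]
  exact Real.sin_nat_mul_two_pi_sub _ _

lemma cos_two_pi_nat_reflect (l : ℕ) (x : ℝ) :
    Real.cos (2 * π * (l : ℝ) * (1 - x)) = Real.cos (2 * π * (l : ℝ) * x) := by
  rw [show 2 * π * (l : ℝ) * (1 - x) = (l : ℝ) * (2 * π) - 2 * π * (l : ℝ) * x by ring]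
  exact Real.cos_nat_mul_two_pi_sub _ _

lemma cos_coeff_eq_half (k l : ℕ) :
    (∫ x in (0 : ℝ)..1, Real.sin (2 * π * (k : ℝ) * tent x) * Real.cos (2 * π * (l : ℝ) * x)) =
      2 * ∫ x in (0 : ℝ)..(1 / 2),
        Real.sin (4 * π * (k : ℝ) * x) * Real.cos (2 * π * (l : ℝ) * x) := by
  set f : ℝ → ℝ := fun x =>
    Real.sin (2 * π * (k : ℝ) * tent x) * Real.cos (2 * π * (l : ℝ) * x) with hf
  have hc : Continuous f := by
    have := continuous_tent
    fun_prop
  have hsymm : ∀ x, f (1 - x) = f x := fun x => by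
    simp only [hf, tent_one_sub, cos_two_pi_nat_reflect]
  have h1 := intervalIntegral.integral_comp_sub_left (a := 0) (b := 1 / 2) f 1
  simp only [hsymm] at h1
  rw [show (1 : ℝ) - 1 / 2 = 1 / 2 by norm_num, sub_zero] at h1
  have h2 : ∫ x in (0 : ℝ)..(1 / 2), f x = ∫ x in (0 : ℝ)..(1 / 2),
      Real.sin (4 * π * (k : ℝ) * x) * Real.cos (2 * π * (l : ℝ) * x) := by
    apply intervalIntegral.integral_congr
    intro x hx
    rw [Set.uIcc_of_le (by norm_num)] at hx
    simp only [hf]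
    rw [tent_of_le_half hx.2]
    ring_nf
  rw [← intervalIntegral.integral_add_adjacent_intervals
    (hc.intervalIntegrable 0 (1 / 2)) (hc.intervalIntegrable (1 / 2) 1), ← h1, h2]
  ring

lemma half_integral_even (k l : ℕ) (hl : Even l) :
    ∫ x in (0 : ℝ)..(1 / 2),
      Real.sin (4 * π * (k : ℝ) * x) * Real.cos (2 * π * (l : ℝ) * x) = 0 := by
  apply integral_eq_zero_of_reflect
  intro x
  obtain ⟨m, rfl⟩ := hl
  rw [show 4 * π * (k : ℝ) * (1 / 2 - x) = (k : ℝ) * (2 * π) - 4 * π * (k : ℝ) * x by ring,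
    show 2 * π * ((m + m : ℕ) : ℝ) * (1 / 2 - x)
      = (m : ℝ) * (2 * π) - 2 * π * ((m + m : ℕ) : ℝ) * x by push_cast; ring,
    Real.sin_nat_mul_two_pi_sub, Real.cos_nat_mul_two_pi_sub]
  ring

lemma half_integral_odd (k l : ℕ) (hl : Odd l) :
    ∫ x in (0 : ℝ)..(1 / 2),
      Real.sin (4 * π * (k : ℝ) * x) * Real.cos (2 * π * (l : ℝ) * x) =
        (2 / π) * (k : ℝ) / (4 * (k : ℝ) ^ 2 - (l : ℝ) ^ 2) := by
  obtain ⟨m, rfl⟩ := hl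
  set L : ℝ := ((2 * m + 1 : ℕ) : ℝ) with hL
  have hp : 2 * (k : ℝ) + L ≠ 0 := by positivity
  -- `2k - ℓ` is nonzero by parity
  have hm : 2 * (k : ℝ) - L ≠ 0 := by
    intro h
    have h' : ((2 * k : ℕ) : ℝ) = ((2 * m + 1 : ℕ) : ℝ) := by push_cast at *; linarith
    have := Nat.cast_injective h'
    omega
  have hderiv : ∀ x ∈ Set.uIcc (0 : ℝ) (1 / 2), HasDerivAt
      (fun x => -Real.cos (2 * π * (2 * k + L) * x) / (4 * π * (2 * k + L))
        - Real.cos (2 * π * (2 * k - L) * x) / (4 * π * (2 * k - L)))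
      (Real.sin (4 * π * (k : ℝ) * x) * Real.cos (2 * π * L * x)) x := by
    intro x _
    have hlin (c : ℝ) : HasDerivAt (fun x => c * x) c x := by
      simpa using (hasDerivAt_id x).const_mul c
    have h1 := ((hlin (2 * π * (2 * k + L))).cos.neg.div_const (4 * π * (2 * k + L))).sub
      ((hlin (2 * π * (2 * k - L))).cos.div_const (4 * π * (2 * k - L)))
    have hdiv (s c : ℝ) (hc : c ≠ 0) : s * (2 * π * c) / (4 * π * c) = s / 2 := by
      field_simp
      norm_num
    refine h1.congr_deriv ?_
    rw [← neg_mul, hdiv _ _ hp, hdiv _ _ hm,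
      show 2 * π * (2 * k + L) * x = 4 * π * k * x + 2 * π * L * x by ring,
      show 2 * π * (2 * k - L) * x = 4 * π * k * x - 2 * π * L * x by ring,
      Real.sin_add, Real.sin_sub]
    ring
  rw [intervalIntegral.integral_eq_sub_of_hasDerivAt hderiv
    (Continuous.intervalIntegrable (by fun_prop) _ _)]
  have c1 : Real.cos (2 * π * (2 * k + L) * (1 / 2)) = -1 := by
    rw [show 2 * π * (2 * k + L) * (1 / 2) = ((k + m : ℕ) : ℝ) * (2 * π) + π by
      rw [hL]; push_cast; ring]
    exact Real.cos_nat_mul_two_pi_add_pi _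
  have c2 : Real.cos (2 * π * (2 * k - L) * (1 / 2)) = -1 := by
    rw [show 2 * π * (2 * k - L) * (1 / 2) = ((k - m - 1 : ℤ) : ℝ) * (2 * π) + π by
      rw [hL]; push_cast; ring]
    exact Real.cos_int_mul_two_pi_add_pi _
  rw [c1, c2, show 4 * (k : ℝ) ^ 2 - L ^ 2 = (2 * k + L) * (2 * k - L) by ring]
  simp only [mul_zero, Real.cos_zero]
  field_simp
  ring

theorem stmt5 (k : ℕ) (hk : 0 < k) (l : ℕ) :
    ((∫ x in (0 : ℝ)..1, Real.sin (2 * π * (k : ℝ) * tent x) * Real.sin (2 * π * (l : ℝ) * x)) = 0) ∧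
    (Even l →
      (∫ x in (0 : ℝ)..1, Real.sin (2 * π * (k : ℝ) * tent x) * Real.cos (2 * π * (l : ℝ) * x)) = 0) ∧
    (Odd l →
      (∫ x in (0 : ℝ)..1, Real.sin (2 * π * (k : ℝ) * tent x) * Real.cos (2 * π * (l : ℝ) * x)) =
        (4 / π) * (k : ℝ) / (4 * (k : ℝ) ^ 2 - (l : ℝ) ^ 2)) := by
  refine ⟨?_, fun hl => ?_, fun hl => ?_⟩
  · apply integral_eq_zero_of_reflect
    intro x
    rw [tent_one_sub, sin_two_pi_nat_reflect]
    ring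
  · rw [cos_coeff_eq_half, half_integral_even k l hl, mul_zero]
  · rw [cos_coeff_eq_half, half_integral_odd k l hl]
    ring
end

section
/- For every positive odd integer ℓ, the series Σ_{k=1}^∞ 1/(4k² − ℓ²)² converges and equals (1/(4ℓ²))·( π²/4 − 2/ℓ² ). -/
open Real

/-!
Partial fractions give
`1 / (4k² - l²)² = 1 / (4l²) * (1 / (2k + l)² + 1 / (2k - l)² - 2 / (4k² - l²))`.
As `k` runs over the positive integers, `2k + l` and `-2k + l` together run over all odd integers
except `l`, so the two squares contribute `π² / 4 - 1 / l²` (`hasSum_shifted_odd_squares`), by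
`∑ 1 / n² = π² / 6`. The last term contributes `1 / l²` by the Mittag-Leffler expansion of
`π cot (π x)` at the half-integer `x = l / 2`, where the cotangent vanishes (`hasSum_cot_term`).
-/

lemma hasSum_nat_odd_squares :
    HasSum (fun n : ℕ => (1 : ℝ) / (2 * (n : ℝ) + 1) ^ 2) (π ^ 2 / 8) := by
  have hz := hasSum_zeta_two
  have he : HasSum (fun n : ℕ => (1 : ℝ) / ((2 * n : ℕ) : ℝ) ^ 2) (1 / 4 * (π ^ 2 / 6)) := by
    refine (hz.mul_left (1 / 4)).congr_fun ?_
    intro n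
    push_cast
    rw [mul_pow, div_mul_div_comm]
    norm_num
  have ho : Summable (fun n : ℕ => (1 : ℝ) / ((2 * n + 1 : ℕ) : ℝ) ^ 2) :=
    hz.summable.comp_injective (i := fun n : ℕ => 2 * n + 1) (fun a b h => by simpa using h)
  have hs := (he.even_add_odd (f := fun n : ℕ => (1 : ℝ) / (n : ℝ) ^ 2) ho.hasSum).unique hz
  have hv : ∑' n : ℕ, (1 : ℝ) / ((2 * n + 1 : ℕ) : ℝ) ^ 2 = π ^ 2 / 8 := by linarith
  have := ho.hasSum
  rw [hv] at this
  simpa using this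

lemma hasSum_int_odd_squares :
    HasSum (fun n : ℤ => (1 : ℝ) / (2 * (n : ℝ) + 1) ^ 2) (π ^ 2 / 4) := by
  have h := HasSum.of_nat_of_neg_add_one (f := fun n : ℤ => (1 : ℝ) / (2 * (n : ℝ) + 1) ^ 2)
    (m := π ^ 2 / 8) (m' := π ^ 2 / 8) (by simpa using hasSum_nat_odd_squares) (by
      refine hasSum_nat_odd_squares.congr_fun fun n => ?_
      push_cast
      congr 1
      ring)
  convert! h using 1
  ring

/-- The reciprocal squares of all odd integers other than `l`, with `2k + l` and `-2k + l`
grouped together. -/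
lemma hasSum_shifted_odd_squares (l : ℕ) (hl : Odd l) :
    HasSum (fun k : ℕ+ => (1 : ℝ) / (2 * ((k : ℕ) : ℝ) + l) ^ 2
      + 1 / (2 * ((k : ℕ) : ℝ) - l) ^ 2) (π ^ 2 / 4 - 1 / (l : ℝ) ^ 2) := by
  obtain ⟨m, rfl⟩ := hl
  have h := ((Equiv.addRight (m : ℤ)).hasSum_iff.mpr hasSum_int_odd_squares).nat_add_neg
  rw [hasSum_pnat_iff (f := fun k : ℕ => (1 : ℝ) / (2 * (k : ℝ) + (2 * m + 1 : ℕ)) ^ 2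
      + 1 / (2 * (k : ℝ) - (2 * m + 1 : ℕ)) ^ 2)]
  convert! h using 1
  · funext n
    simp only [Function.comp, Equiv.coe_addRight]
    push_cast
    congr 2 <;> ring
  · have e : (-1 + -(2 * (m : ℝ))) ^ 2 = (2 * (m : ℝ) + 1) ^ 2 := by ring
    simp [e]

/-- The cotangent expansion at the half-integer `l / 2`. -/
lemma hasSum_cot_term (l : ℕ) (hl : Odd l) :
    HasSum (fun k : ℕ+ => (1 : ℝ) / (2 * ((k : ℕ) : ℝ) - l) - 1 / (2 * ((k : ℕ) : ℝ) + l))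
      (1 / (l : ℝ)) := by
  have hx : ((l : ℂ) / 2) ∈ Complex.integerComplement := by
    rintro ⟨n, hn⟩
    have h2 : (l : ℂ) = ((2 * n : ℤ) : ℂ) := by
      push_cast
      rw [hn]
      ring
    have h3 : (l : ℤ) = 2 * n := by exact_mod_cast h2
    obtain ⟨m, rfl⟩ := hl
    omega
  have hcot : Complex.cot (π * ((l : ℂ) / 2)) = 0 := by
    obtain ⟨m, rfl⟩ := hl
    rw [Complex.cot, div_eq_zero_iff, Complex.cos_eq_zero_iff]
    left
    refine ⟨m, ?_⟩
    push_cast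
    ring
  have hs := (summable_cotTerm hx).hasSum
  rw [← cot_series_rep' hx, hcot] at hs
  rw [hasSum_pnat_iff_hasSum_succ
    (f := fun k : ℕ => (1 : ℝ) / (2 * (k : ℝ) - l) - 1 / (2 * (k : ℝ) + l)),
    ← Complex.hasSum_ofReal]
  have hs' := hs.mul_left (-1 / 2)
  convert! hs' using 1
  · funext n
    have e1 : (l : ℂ) / 2 - (n + 1) = -(2 * (n + 1) - l) / 2 := by ring
    have e2 : (l : ℂ) / 2 + (n + 1) = (2 * (n + 1) + l) / 2 := by ring
    simp only [cotTerm, e1, e2]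
    push_cast
    simp only [one_div, inv_div, div_neg]
    ring
  · push_cast
    simp only [one_div, inv_div]
    ring

theorem stmt7 (l : ℕ) (hl : Odd l) (hl0 : 0 < l) :
    HasSum (fun k : ℕ+ => (1 : ℝ) / (4 * ((k : ℕ) : ℝ) ^ 2 - (l : ℝ) ^ 2) ^ 2)
      ((1 / (4 * (l : ℝ) ^ 2)) * (π ^ 2 / 4 - 2 / (l : ℝ) ^ 2)) := by
  have hl' : (l : ℝ) ≠ 0 := by positivity
  have h := ((hasSum_shifted_odd_squares l hl).sub
    ((hasSum_cot_term l hl).mul_left (1 / (l : ℝ)))).mul_left (1 / (4 * (l : ℝ) ^ 2))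
  convert! h using 1
  · funext k
    have hk : (2 * ((k : ℕ) : ℝ) + l) ≠ 0 := by positivity
    have hk' : (2 * ((k : ℕ) : ℝ) - l) ≠ 0 := by
      intro h0
      have h1 : 2 * (k : ℕ) = l := by
        have : 2 * ((k : ℕ) : ℝ) = l := by linarith
        exact_mod_cast this
      obtain ⟨m, rfl⟩ := hl
      omega
    have e : 4 * ((k : ℕ) : ℝ) ^ 2 - (l : ℝ) ^ 2
        = (2 * ((k : ℕ) : ℝ) + l) * (2 * ((k : ℕ) : ℝ) - l) := by ring
    rw [e]
    field_simp
    ring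
  · field_simp
    ring
end

section
/- For every positive odd integer ℓ, the series Σ_{k=1}^∞ 1/( k²·(4k² − ℓ²)² ) converges and equals (1/ℓ⁴)·( 5π²/12 − 4/ℓ² ). -/
/-!
Write `L = l²` and `u = 4k²`. Partial fractions give
`4 / (u (u - L)²) = 4 (1 / (L² u) - 1 / (L² (u - L)) + 1 / (L (u - L)²))`, and
`1 / (u - L)² = (1 / (4L)) (1 / (2k - l)² + 1 / (2k + l)² - 2 / (u - L))`,
so three sums over `k ≥ 1` suffice: `∑ 1 / k² = π² / 6`; `∑ 1 / (u - L) = 1 / (2L)`, the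
Mittag-Leffler expansion of `π cot (π x)` at the half-integer `x = l / 2`, where the cotangent
vanishes (`hasSum_one_div_sub`); and `∑ (1 / (2k + l)² + 1 / (2k - l)²) = π² / 4 - 1 / l²`, the sum
of the inverse squares of all odd integers, with the term `k = 0` left out (`hasSum_inv_sq_pair`).
These three sums are indexed by `n = k - 1 : ℕ`.
-/

open Real

lemma hasSum_odd_inv_sq :
    HasSum (fun n : ℕ => 1 / (2 * (n : ℝ) + 1) ^ 2) (π ^ 2 / 8) := by
  have hz := hasSum_zeta_two
  have he : HasSum (fun n : ℕ => (1 : ℝ) / ((2 * n : ℕ) : ℝ) ^ 2) (π ^ 2 / 24) := by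
    convert! hz.mul_left (1 / 4) using 1
    · ext n
      push_cast
      rw [mul_pow, div_mul_div_comm]
      norm_num
    · ring
  have ho : Summable (fun n : ℕ => (1 : ℝ) / ((2 * n + 1 : ℕ) : ℝ) ^ 2) :=
    hz.summable.comp_injective (i := fun n : ℕ => 2 * n + 1) (fun a b h => by simpa using h)
  have hval := (he.even_add_odd (f := fun n : ℕ => (1 : ℝ) / (n : ℝ) ^ 2) ho.hasSum).unique hz
  have h := ho.hasSum
  rw [show ∑' n : ℕ, (1 : ℝ) / ((2 * n + 1 : ℕ) : ℝ) ^ 2 = π ^ 2 / 8 by linarith] at h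
  simpa using h

lemma hasSum_int_odd_inv_sq :
    HasSum (fun m : ℤ => 1 / (2 * (m : ℝ) + 1) ^ 2) (π ^ 2 / 4) := by
  have h := HasSum.of_nat_of_neg_add_one (f := fun m : ℤ => 1 / (2 * (m : ℝ) + 1) ^ 2)
    (by simpa using hasSum_odd_inv_sq)
    (m' := π ^ 2 / 8) (by
      convert! hasSum_odd_inv_sq using 2 with n
      push_cast
      ring)
  convert! h using 1
  ring

lemma hasSum_inv_sq_pair (l : ℕ) (hl : Odd l) :
    HasSum (fun n : ℕ => 1 / (2 * ((n : ℝ) + 1) + l) ^ 2 + 1 / (2 * ((n : ℝ) + 1) - l) ^ 2)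
      (π ^ 2 / 4 - 1 / (l : ℝ) ^ 2) := by
  obtain ⟨j, rfl⟩ := hl
  -- For `l = 2j + 1`, translating the index by `j` turns `2m + 1` into `2m + l`.
  have h := ((Equiv.addRight (j : ℤ)).hasSum_iff.mpr hasSum_int_odd_inv_sq).nat_add_neg
  have h' := (hasSum_nat_add_iff' 1).mpr h
  convert! h' using 1
  · ext n
    simp only [Function.comp, Equiv.coe_addRight]
    push_cast
    congr 2
    · ring
    · ring
  · simp

lemma hasSum_one_div_sub (l : ℕ) (hl : Odd l) :
    HasSum (fun n : ℕ => 1 / (4 * ((n : ℝ) + 1) ^ 2 - (l : ℝ) ^ 2)) (1 / (2 * (l : ℝ) ^ 2)) := by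
  have hl0 : (l : ℂ) ≠ 0 := by exact_mod_cast hl.pos.ne'
  have hodd : ∀ m : ℤ, 2 * m ≠ l := by
    intro m hm
    obtain ⟨j, rfl⟩ := hl
    omega
  have hx : (l / 2 : ℂ) ∈ Complex.integerComplement := by
    rintro ⟨m, hm⟩
    apply hodd m
    have : (2 * m : ℂ) = l := by rw [hm]; ring
    exact_mod_cast this
  have hcot : Complex.cot (π * (l / 2 : ℂ)) = 0 := by
    obtain ⟨j, rfl⟩ := hl
    rw [Complex.cot, div_eq_zero_iff]
    left
    rw [Complex.cos_eq_zero_iff]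
    exact ⟨j, by push_cast; ring⟩
  have h := (summable_cotTerm hx).hasSum
  rw [← cot_series_rep' hx, hcot] at h
  have h2 := h.mul_left (-1 / (4 * (l : ℂ)))
  rw [← Complex.hasSum_ofReal]
  convert! h2 using 1
  · ext n
    rw [cotTerm_identity hx]
    have h1 : (2 * ((n : ℂ) + 1) - l) ≠ 0 := by
      intro h0
      apply hodd (n + 1)
      have : (2 * ((n : ℂ) + 1)) = l := sub_eq_zero.mp h0
      exact_mod_cast this
    have h3 : (2 * ((n : ℂ) + 1) + l) ≠ 0 := by
      exact_mod_cast (by omega : 2 * (n + 1) + l ≠ 0)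
    have e1 : (4 * ((n : ℂ) + 1) ^ 2 - (l : ℂ) ^ 2)
        = (2 * ((n : ℂ) + 1) - l) * (2 * ((n : ℂ) + 1) + l) := by ring
    have e2 : ((l / 2 : ℂ) + (n + 1)) * (l / 2 - (n + 1))
        = -((2 * ((n : ℂ) + 1) - l) * (2 * ((n : ℂ) + 1) + l)) / 4 := by ring
    push_cast
    rw [e1, e2]
    field_simp
  · push_cast
    field_simp
    norm_num


theorem stmt8 (l : ℕ) (hl : Odd l) (hl0 : 0 < l) :
    HasSum (fun k : ℕ+ =>
        (1 : ℝ) / (((k : ℕ) : ℝ) ^ 2 * (4 * ((k : ℕ) : ℝ) ^ 2 - (l : ℝ) ^ 2) ^ 2))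
      ((1 / (l : ℝ) ^ 4) * (5 * π ^ 2 / 12 - 4 / (l : ℝ) ^ 2)) := by
  rw [← Equiv.pnatEquivNat.symm.hasSum_iff]
  have hL : (l : ℝ) ≠ 0 := by exact_mod_cast hl0.ne'
  have hz : HasSum (fun n : ℕ => 1 / ((n : ℝ) + 1) ^ 2) (π ^ 2 / 6) := by
    simpa using (hasSum_nat_add_iff' 1).mpr hasSum_zeta_two
  have hs := hasSum_one_div_sub l hl
  have hp := hasSum_inv_sq_pair l hl
  -- The coefficients come from the two partial fraction identities combined.
  have h := ((hz.mul_left (1 / (l : ℝ) ^ 4)).sub (hs.mul_left (6 / (l : ℝ) ^ 4))).add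
    (hp.mul_left (1 / (l : ℝ) ^ 4))
  convert! h using 1
  · ext n
    have h1 : (2 * ((n : ℝ) + 1) - l) ≠ 0 := by
      intro h0
      have : (2 * ((n : ℝ) + 1)) = l := sub_eq_zero.mp h0
      have : 2 * (n + 1) = l := by exact_mod_cast this
      obtain ⟨j, rfl⟩ := hl
      omega
    have h3 : (2 * ((n : ℝ) + 1) + l) ≠ 0 := by positivity
    have h4 : ((n : ℝ) + 1) ≠ 0 := by positivity
    have e1 : (4 * ((n : ℝ) + 1) ^ 2 - (l : ℝ) ^ 2)
        = (2 * ((n : ℝ) + 1) - l) * (2 * ((n : ℝ) + 1) + l) := by ring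
    simp only [Function.comp, Equiv.pnatEquivNat_symm_apply, Nat.succPNat_coe, Nat.succ_eq_add_one]
    push_cast
    rw [e1]
    generalize (n : ℝ) + 1 = x at *
    clear hz hs hp h e1
    generalize (l : ℝ) = y at *
    generalize hp : 2 * x - y = p at *
    generalize hq : 2 * x + y = q at *
    field_simp
    subst hp hq
    ring
  · field_simp
    ring
end

section
/- For all positive odd integers ℓ and m with ℓ ≠ m, the series Σ_{k=1}^∞ 1/( k²·(4k² − ℓ²)·(4k² − m²) ) converges and equals (1/(ℓ²m²))·( π²/6 − 2/ℓ² − 2/m² ). -/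
open Real

/-!
Put `a = l²`, `b = m²`. The partial fraction decomposition in the variable `4k²` is
`1 / (k² (4k² - a) (4k² - b)) =
  (1 / (a b)) / k² + (4 / (a (a - b))) / (4k² - a) + (4 / (b (b - a))) / (4k² - b)`,
so the claim reduces to `∑ 1 / k² = π² / 6` and, for odd `l`, to
`∑ 1 / (4k² - l²) = 1 / (2 l²)` (`hasSum_one_div_four_mul_sq_sub_sq`). The latter is the
Mittag-Leffler expansion of `π cot (π x)` at `x = l / 2`, a zero of the cotangent.
-/

lemma four_mul_sq_sub_sq_ne_zero {l : ℕ} (hl : Odd l) (k : ℕ) :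
    4 * (k : ℝ) ^ 2 - (l : ℝ) ^ 2 ≠ 0 := by
  intro h
  have h2 : (2 * k) ^ 2 = l ^ 2 := by
    have : ((2 : ℝ) * k) ^ 2 = (l : ℝ) ^ 2 := by linarith
    exact_mod_cast this
  have h3 : 2 * k = l := Nat.pow_left_injective two_ne_zero h2
  obtain ⟨j, rfl⟩ := hl
  omega

/-- The cotangent expansion at `l / 2`, where the cotangent vanishes. -/
lemma hasSum_one_div_four_mul_sq_sub_sq {l : ℕ} (hl : Odd l) :
    HasSum (fun k : ℕ+ => (1 : ℝ) / (4 * ((k : ℕ) : ℝ) ^ 2 - (l : ℝ) ^ 2))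
      (1 / (2 * (l : ℝ) ^ 2)) := by
  have hl0 : (l : ℂ) ≠ 0 := by exact_mod_cast hl.pos.ne'
  have hx : (l / 2 : ℂ) ∈ Complex.integerComplement := by
    rintro ⟨n, hn⟩
    have h1 : (2 * n : ℂ) = l := by rw [hn]; ring
    have h2 : 2 * n = (l : ℤ) := by exact_mod_cast h1
    obtain ⟨j, rfl⟩ := hl
    omega
  have hcot : Complex.cot (π * (l / 2 : ℂ)) = 0 := by
    obtain ⟨j, rfl⟩ := hl
    have hcos : Complex.cos (π * (((2 * j + 1 : ℕ) : ℂ) / 2)) = 0 :=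
      Complex.cos_eq_zero_iff.2 ⟨j, by push_cast; ring⟩
    rw [Complex.cot, hcos, zero_div]
  have hs := (summable_cotTerm hx).hasSum_iff_tendsto_nat.mpr (tendsto_logDeriv_euler_cot_sub hx)
  rw [hcot] at hs
  refine (hasSum_pnat_iff_hasSum_succ
    (f := fun k : ℕ => (1 : ℝ) / (4 * (k : ℝ) ^ 2 - (l : ℝ) ^ 2))).2 ?_
  rw [← Complex.hasSum_ofReal]
  convert! hs.mul_left (-1 / (4 * l) : ℂ) using 1
  · funext k
    have hne := four_mul_sq_sub_sq_ne_zero hl (k + 1)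
    have hne' : 4 * ((k : ℂ) + 1) ^ 2 - (l : ℂ) ^ 2 ≠ 0 := by exact_mod_cast hne
    have h1 : (l / 2 + (k + 1) : ℂ) ≠ 0 := fun h =>
      hne' (by linear_combination 4 * ((k : ℂ) + 1 - l / 2) * h)
    have h2 : (l / 2 - (k + 1) : ℂ) ≠ 0 := fun h =>
      hne' (by linear_combination (-4) * ((k : ℂ) + 1 + l / 2) * h)
    rw [cotTerm_identity hx]
    have h3 : 4 * ((k : ℂ) + 1) ^ 2 - (l : ℂ) ^ 2
        = -4 * ((l / 2 + (k + 1)) * (l / 2 - (k + 1))) := by ring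
    push_cast
    rw [h3]
    field_simp
  · push_cast
    field_simp
    norm_num

theorem stmt9 (l m : ℕ) (hl : Odd l) (hl0 : 0 < l) (hm : Odd m) (hm0 : 0 < m) (hlm : l ≠ m) :
    HasSum (fun k : ℕ+ =>
        (1 : ℝ) / (((k : ℕ) : ℝ) ^ 2 * (4 * ((k : ℕ) : ℝ) ^ 2 - (l : ℝ) ^ 2) *
          (4 * ((k : ℕ) : ℝ) ^ 2 - (m : ℝ) ^ 2)))
      ((1 / ((l : ℝ) ^ 2 * (m : ℝ) ^ 2)) * (π ^ 2 / 6 - 2 / (l : ℝ) ^ 2 - 2 / (m : ℝ) ^ 2)) := by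
  have hL : (l : ℝ) ≠ 0 := by exact_mod_cast hl0.ne'
  have hM : (m : ℝ) ≠ 0 := by exact_mod_cast hm0.ne'
  have hLM : (l : ℝ) ^ 2 - (m : ℝ) ^ 2 ≠ 0 := by
    rw [sub_ne_zero]
    exact_mod_cast fun h => hlm (Nat.pow_left_injective two_ne_zero h)
  have hz : HasSum (fun k : ℕ+ => (1 : ℝ) / ((k : ℕ) : ℝ) ^ 2) (π ^ 2 / 6) :=
    (hasSum_pnat_iff (f := fun k : ℕ => (1 : ℝ) / (k : ℝ) ^ 2)).2
      (by simpa using hasSum_zeta_two)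
  have h := ((hz.mul_left (1 / ((l : ℝ) ^ 2 * (m : ℝ) ^ 2))).add
    ((hasSum_one_div_four_mul_sq_sub_sq hl).mul_left
      (4 / ((l : ℝ) ^ 2 * ((l : ℝ) ^ 2 - (m : ℝ) ^ 2))))).sub
    ((hasSum_one_div_four_mul_sq_sub_sq hm).mul_left
      (4 / ((m : ℝ) ^ 2 * ((l : ℝ) ^ 2 - (m : ℝ) ^ 2))))
  convert! h using 1
  · funext k
    have hk : ((k : ℕ) : ℝ) ≠ 0 := by exact_mod_cast k.ne_zero
    have h1 := four_mul_sq_sub_sq_ne_zero hl k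
    have h2 := four_mul_sq_sub_sq_ne_zero hm k
    -- `field_simp` recognises the denominators only with the numeral on the right.
    rw [mul_comm 4 (((k : ℕ) : ℝ) ^ 2)] at h1 h2 ⊢
    field_simp
    ring
  · field_simp
    ring
end

section
/- For all x, y ∈ [0,1], b̃₄(φ(x) − φ(y)) = −(2/π⁴)·Σ_{k≥2, k even} cos(2πkx)·cos(2πky)/k⁴ − (1/(8π⁴))·Σ_{k=1}^∞ sin(2πk·φ(x))·sin(2πk·φ(y))/k⁴, where both series converge absolutely. -/
/-!
The Fourier series of the Bernoulli polynomial of degree four,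
`b̃₄(t) = -(1 / (8π⁴)) ∑_{k ≥ 1} cos (2πkt) / k⁴` (`bper_four_eq`), is evaluated at
`t = φ(x) - φ(y)`, and the cosine is expanded by the addition formula. The sine products give the
second series directly. For the cosine products, `φ(x)` is either `2x` or `2 - 2x`, so
`cos (2πk φ(x)) = cos (2π(2k)x)` (`cos_tent`); reindexing by the even integer `2k` turns `1 / k⁴`
into `16 / (2k)⁴`, which gives the first series. Absolute convergence is comparison with `∑ 1 / k⁴`.
-/

open Real

/-- `b̃_n(x) = B_n(x − ⌊x⌋)/n!`, the 1-periodic extension of `B_n/n!`. -/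
noncomputable def bper (n : ℕ) (x : ℝ) : ℝ := bern n (Int.fract x) / (Nat.factorial n : ℝ)

lemma cos_tent (k : ℕ) (x : ℝ) :
    Real.cos (2 * π * (k : ℝ) * tent x) = Real.cos (2 * π * (2 * (k : ℝ)) * x) := by
  unfold tent
  rcases abs_cases (2 * x - 1) with ⟨h, _⟩ | ⟨h, _⟩ <;> rw [h]
  · rw [← Real.cos_nat_mul_two_pi_sub _ (2 * k)]
    congr 1
    push_cast
    ring
  · congr 1
    ring

/-- Multiplication by two, as a bijection from the positive integers to the even ones. -/
noncomputable def doubleEquiv : ℕ+ ≃ {k : ℕ+ // Even (k : ℕ)} :=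
  Equiv.ofBijective (fun k => ⟨2 * k, by simp⟩) <| by
    constructor
    · intro a b h
      exact mul_left_cancel (congrArg Subtype.val h)
    · rintro ⟨k, r, hr⟩
      have := k.pos
      refine ⟨⟨r, by omega⟩, ?_⟩
      apply Subtype.ext
      apply PNat.eq
      exact (two_mul r).trans hr.symm

lemma doubleEquiv_coe (k : ℕ+) : (((doubleEquiv k : ℕ+) : ℕ) : ℝ) = 2 * ((k : ℕ) : ℝ) := by
  have h : ((doubleEquiv k : ℕ+) : ℕ) = 2 * (k : ℕ) := rfl
  rw [h]
  push_cast
  rfl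

lemma summable_pnat_inv : Summable (fun k : ℕ+ => 1 / ((k : ℕ) : ℝ) ^ 4) :=
  (Real.summable_one_div_nat_pow.mpr (by norm_num : 1 < 4)).comp_injective PNat.coe_injective

lemma abs_mul_div_le {a b c : ℝ} (ha : |a| ≤ 1) (hb : |b| ≤ 1) :
    |a * b / c ^ 4| ≤ 1 / c ^ 4 := by
  have hc : |c ^ 4| = c ^ 4 := abs_of_nonneg (by positivity)
  rw [abs_div, abs_mul, hc]
  gcongr
  exact mul_le_one₀ ha (abs_nonneg _) hb

/-- The Fourier expansion of the periodized Bernoulli polynomial of degree four. -/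
lemma bper_four_eq (t : ℝ) :
    bper 4 t = -(1 / (8 * π ^ 4)) * ∑' k : ℕ+, Real.cos (2 * π * ((k : ℕ) : ℝ) * t) /
      ((k : ℕ) : ℝ) ^ 4 := by
  have h := hasSum_one_div_nat_pow_mul_cos (k := 2) two_ne_zero (x := Int.fract t)
    ⟨Int.fract_nonneg t, (Int.fract_lt_one t).le⟩
  -- The term at `0` vanishes because `1 / 0 = 0`, so the sum may be taken over `ℕ+`.
  rw [← PNat.coe_injective.hasSum_iff] at h
  · have e : ∀ k : ℕ+, Real.cos (2 * π * ((k : ℕ) : ℝ) * t) / ((k : ℕ) : ℝ) ^ 4 =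
        1 / ((k : ℕ) : ℝ) ^ (2 * 2) * Real.cos (2 * π * ((k : ℕ) : ℝ) * Int.fract t) := by
      intro k
      have hc : Real.cos (2 * π * ((k : ℕ) : ℝ) * Int.fract t) =
          Real.cos (2 * π * ((k : ℕ) : ℝ) * t) := by
        rw [← Real.cos_sub_int_mul_two_pi (2 * π * ((k : ℕ) : ℝ) * t) ((k : ℕ) * ⌊t⌋)]
        congr 1
        rw [← Int.self_sub_floor]
        push_cast
        ring
      rw [hc]
      ring
    have h' := h.tsum_eq
    simp only [Function.comp_def] at h'
    rw [tsum_congr e, h', bper, bern, Polynomial.eval_map_algebraMap]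
    norm_num [Nat.factorial]
    field_simp
    ring
  · intro n hn
    have : n = 0 := by
      by_contra h0
      exact hn ⟨⟨n, Nat.pos_of_ne_zero h0⟩, rfl⟩
    simp [this]

theorem stmt10 (x y : ℝ) (hx : x ∈ Set.Icc (0 : ℝ) 1) (hy : y ∈ Set.Icc (0 : ℝ) 1) :
    Summable (fun k : {k : ℕ+ // Even (k : ℕ)} =>
      |Real.cos (2 * π * (((k : ℕ+) : ℕ) : ℝ) * x) * Real.cos (2 * π * (((k : ℕ+) : ℕ) : ℝ) * y) /
        (((k : ℕ+) : ℕ) : ℝ) ^ 4|) ∧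
    Summable (fun k : ℕ+ =>
      |Real.sin (2 * π * ((k : ℕ) : ℝ) * tent x) * Real.sin (2 * π * ((k : ℕ) : ℝ) * tent y) /
        ((k : ℕ) : ℝ) ^ 4|) ∧
    bper 4 (tent x - tent y) =
      -(2 / π ^ 4) * (∑' k : {k : ℕ+ // Even (k : ℕ)},
        Real.cos (2 * π * (((k : ℕ+) : ℕ) : ℝ) * x) * Real.cos (2 * π * (((k : ℕ+) : ℕ) : ℝ) * y) /
          (((k : ℕ+) : ℕ) : ℝ) ^ 4)
      - (1 / (8 * π ^ 4)) * ∑' k : ℕ+,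
          Real.sin (2 * π * ((k : ℕ) : ℝ) * tent x) * Real.sin (2 * π * ((k : ℕ) : ℝ) * tent y) /
            ((k : ℕ) : ℝ) ^ 4 := by
  have hS : Summable (fun k : ℕ+ =>
      |Real.sin (2 * π * ((k : ℕ) : ℝ) * tent x) * Real.sin (2 * π * ((k : ℕ) : ℝ) * tent y) /
        ((k : ℕ) : ℝ) ^ 4|) :=
    Summable.of_nonneg_of_le (fun _ => abs_nonneg _)
      (fun _ => abs_mul_div_le (Real.abs_sin_le_one _) (Real.abs_sin_le_one _)) summable_pnat_inv
  have hC : Summable (fun k : {k : ℕ+ // Even (k : ℕ)} =>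
      |Real.cos (2 * π * (((k : ℕ+) : ℕ) : ℝ) * x) * Real.cos (2 * π * (((k : ℕ+) : ℕ) : ℝ) * y) /
        (((k : ℕ+) : ℕ) : ℝ) ^ 4|) :=
    Summable.of_nonneg_of_le (fun _ => abs_nonneg _)
      (fun _ => abs_mul_div_le (Real.abs_cos_le_one _) (Real.abs_cos_le_one _))
      (summable_pnat_inv.comp_injective Subtype.val_injective)
  refine ⟨hC, hS, ?_⟩
  have hC' := (doubleEquiv.summable_iff.mpr hC.of_abs).mul_left 16
  rw [bper_four_eq, ← doubleEquiv.tsum_eq]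
  have e : ∀ k : ℕ+, Real.cos (2 * π * ((k : ℕ) : ℝ) * (tent x - tent y)) / ((k : ℕ) : ℝ) ^ 4 =
      16 * (Real.cos (2 * π * (((doubleEquiv k : ℕ+) : ℕ) : ℝ) * x) *
        Real.cos (2 * π * (((doubleEquiv k : ℕ+) : ℕ) : ℝ) * y) /
          (((doubleEquiv k : ℕ+) : ℕ) : ℝ) ^ 4) +
      Real.sin (2 * π * ((k : ℕ) : ℝ) * tent x) * Real.sin (2 * π * ((k : ℕ) : ℝ) * tent y) /
        ((k : ℕ) : ℝ) ^ 4 := by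
    intro k
    have hk : ((k : ℕ) : ℝ) ≠ 0 := by simp
    rw [doubleEquiv_coe, ← cos_tent, ← cos_tent, mul_sub, Real.cos_sub]
    field_simp
    ring
  rw [tsum_congr e]
  simp only [Function.comp_def] at hC'
  rw [hC'.tsum_add hS.of_abs, tsum_mul_left]
  ring
end

section
/- Let α ≥ 2 be an even integer, N, s positive integers, z ∈ {1,…,N−1}^s, and u ⊆ {1,…,s} a nonempty subset. Then Σ_{k∈P^{⊥,u}_{N,z}} Π_{j∈u} 1/k_j^α = (1/N)·Σ_{n=0}^{N−1} Π_{j∈u} [ (−1)^{1+α/2}·(2π)^α·b_α({n z_j/N}) ], where the sum on the left converges absolutely. -/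
/-!
By Fourier theory, `-(2πi)^α / α! · B_α({x}) = ∑_{k ≠ 0} e(k x) / k^α` absolutely for `α ≥ 2`, where
`e(t) = exp (2πit)`; for even `α` the constant `-(2πi)^α` equals `(-1)^(1+α/2) (2π)^α`.
Multiplying these series over `j ∈ u` at `x = n z_j / N` (`hasSum_pi_prod`) turns each product of
Bernoulli values into an absolutely convergent sum over `k ∈ ℤ^u` of `∏ 1/k_j^α · e(n (k·z)/N)`.
Averaging over `n = 0, …, N-1` and using orthogonality of characters (`character_average`)
keeps exactly the `k` with `N ∣ k·z`. The vectors with a zero coordinate contribute nothing,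
because `1 / 0 ^ α = 0` in Lean.
-/

open Real

/-- A finite product of absolutely convergent series over `ℤ` is the absolutely convergent
series, over integer vectors, of the products; here the factors are indexed by `Fin n`. -/
lemma hasSum_fin_prod (n : ℕ) (f : Fin n → ℤ → ℂ) (a : Fin n → ℂ)
    (hf : ∀ i, Summable fun m => ‖f i m‖) (ha : ∀ i, HasSum (f i) (a i)) :
    (Summable fun k : Fin n → ℤ => ‖∏ i, f i (k i)‖) ∧
      HasSum (fun k : Fin n → ℤ => ∏ i, f i (k i)) (∏ i, a i) := by
  induction n with
  | zero =>
    refine ⟨Summable.of_finite, ?_⟩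
    simp
  | succ n ih =>
    obtain ⟨hs, hh⟩ := ih (fun i => f i.succ) (fun i => a i.succ)
      (fun i => hf i.succ) (fun i => ha i.succ)
    have hs' := (hf 0).mul_norm hs
    have hh' := (ha 0).mul hh hs'.of_norm
    constructor
    · rw [← (Fin.consEquiv fun _ : Fin (n + 1) => ℤ).summable_iff]
      refine hs'.congr fun p => ?_
      simp [Fin.consEquiv, Fin.prod_univ_succ]
    · rw [← (Fin.consEquiv fun _ : Fin (n + 1) => ℤ).hasSum_iff, Fin.prod_univ_succ]
      have hfun : (fun k : Fin (n + 1) → ℤ => ∏ i, f i (k i)) ∘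
          (Fin.consEquiv fun _ : Fin (n + 1) => ℤ) =
          fun p : ℤ × (Fin n → ℤ) => f 0 p.1 * ∏ i : Fin n, f i.succ (p.2 i) := by
        funext p
        simp [Fin.consEquiv, Fin.prod_univ_succ]
      rw [hfun]
      exact hh'

/-- The product of finitely many absolutely convergent series, with an arbitrary finite
index type. -/
lemma hasSum_pi_prod {ι : Type*} [Fintype ι] (f : ι → ℤ → ℂ) (a : ι → ℂ)
    (hf : ∀ i, Summable fun m => ‖f i m‖) (ha : ∀ i, HasSum (f i) (a i)) :
    HasSum (fun k : ι → ℤ => ∏ i, f i (k i)) (∏ i, a i) := by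
  let e := Fintype.equivFin ι
  have h := (hasSum_fin_prod (Fintype.card ι) (fun i => f (e.symm i)) (fun i => a (e.symm i))
    (fun i => hf _) (fun i => ha _)).2
  rw [Equiv.prod_comp e.symm a, ← (e.arrowCongr (Equiv.refl ℤ)).hasSum_iff] at h
  convert h using 2 with k
  rw [← Equiv.prod_comp e.symm]
  simp [Equiv.arrowCongr]

/-- Orthogonality of the characters of `ℤ/N`. -/
lemma character_average (N : ℕ) (hN : 0 < N) (m : ℤ) :
    (1 / (N : ℂ)) * ∑ n ∈ Finset.range N, Complex.exp (2 * π * Complex.I * (n * m / N)) =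
      if (N : ℤ) ∣ m then 1 else 0 := by
  have hN' : (N : ℂ) ≠ 0 := by exact_mod_cast hN.ne'
  have hprim := Complex.isPrimitiveRoot_exp N hN.ne'
  set ζ := Complex.exp (2 * π * Complex.I / N) with hζ
  have hterm : ∀ n : ℕ, Complex.exp (2 * π * Complex.I * (n * m / N)) = (ζ ^ m) ^ n := by
    intro n
    rw [hζ, ← Complex.exp_int_mul, ← Complex.exp_nat_mul]
    congr 1
    ring
  simp_rw [hterm]
  split_ifs with h
  · rw [(hprim.zpow_eq_one_iff_dvd m).2 h]
    simp [hN']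
  · have h1 : ζ ^ m ≠ 1 := fun h' => h ((hprim.zpow_eq_one_iff_dvd m).1 h')
    rw [geom_sum_eq h1, ← zpow_natCast, ← zpow_mul, mul_comm m, zpow_mul, zpow_natCast,
      hprim.pow_eq_one]
    simp

/-- The Fourier series of the periodized Bernoulli polynomial of even degree, with the constant
`-(2πi)^α` written in real form. -/
lemma hasSum_bern (α : ℕ) (hα : 2 ≤ α) (hαe : Even α) (x : ℝ) :
    HasSum (fun m : ℤ => 1 / (m : ℂ) ^ α * Complex.exp (2 * π * Complex.I * (m * x)))
      (((-1 : ℝ) ^ (1 + α / 2) * (2 * π) ^ α *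
        (bern α (Int.fract x) / (Nat.factorial α : ℝ)) : ℝ) : ℂ) := by
  have h := hasSum_one_div_pow_mul_fourier_mul_bernoulliFun hα
    (x := Int.fract x) ⟨Int.fract_nonneg x, (Int.fract_lt_one x).le⟩
  convert h using 1
  · funext m
    rw [AddCircle.coe_fract, fourier_coe_apply]
    congr 2
    push_cast
    ring
  · obtain ⟨r, rfl⟩ := hαe
    have hr : (r + r) / 2 = r := by omega
    have hI : Complex.I ^ (r + r) = (-1) ^ r := by
      rw [← two_mul, pow_mul, Complex.I_sq]
    rw [hr, mul_pow _ Complex.I, hI]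
    have hB : bernoulliFun (r + r) (Int.fract x) = bern (r + r) (Int.fract x) := by
      simp [bern, bernoulliFun, Polynomial.aeval_def, Polynomial.eval_map]
    rw [hB]
    push_cast
    ring

/-- A real sum over a subset may be computed as a complex sum of the indicator. -/
lemma hasSum_subtype_of_complex_indicator {β : Type*} (S : Set β) (F : β → ℝ) (R : ℝ)
    (h : HasSum (fun k => ((S.indicator F k : ℝ) : ℂ)) (R : ℂ)) :
    HasSum (fun k : S => F k) R :=
  hasSum_subtype_iff_indicator.2 (Complex.hasSum_ofReal.1 h)

theorem stmt11 (α : ℕ) (hα : 2 ≤ α) (hαe : Even α) (N s : ℕ) (hN : 0 < N) (hs : 0 < s)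
    (z : Fin s → ℤ) (hz : ∀ j, 1 ≤ z j ∧ z j ≤ (N : ℤ) - 1)
    (u : Finset (Fin s)) (hu : u.Nonempty) :
    Summable (fun k : {k : {j // j ∈ u} → ℤ //
        (∀ j, k j ≠ 0) ∧ ((N : ℤ) ∣ ∑ j ∈ u.attach, k j * z j.1)} =>
      ∏ j ∈ u.attach, (1 : ℝ) / ((k.1 j : ℝ)) ^ α) ∧
    (∑' k : {k : {j // j ∈ u} → ℤ //
        (∀ j, k j ≠ 0) ∧ ((N : ℤ) ∣ ∑ j ∈ u.attach, k j * z j.1)},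
      ∏ j ∈ u.attach, (1 : ℝ) / ((k.1 j : ℝ)) ^ α) =
    (1 / (N : ℝ)) * ∑ n ∈ Finset.range N, ∏ j ∈ u,
      ((-1 : ℝ) ^ (1 + α / 2) * (2 * π) ^ α *
        (bern α (Int.fract ((n : ℝ) * (z j : ℝ) / (N : ℝ))) / (Nat.factorial α : ℝ))) := by
  classical
  have hα0 : α ≠ 0 := by omega
  set S : Set ({j // j ∈ u} → ℤ) := {k | (∀ j, k j ≠ 0) ∧
    ((N : ℤ) ∣ ∑ j ∈ u.attach, k j * z j.1)} with hS
  set F : ({j // j ∈ u} → ℤ) → ℝ := fun k => ∏ j ∈ u.attach, (1 : ℝ) / ((k j : ℝ)) ^ α with hF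
  set R : ℝ := (1 / (N : ℝ)) * ∑ n ∈ Finset.range N, ∏ j ∈ u,
      ((-1 : ℝ) ^ (1 + α / 2) * (2 * π) ^ α *
        (bern α (Int.fract ((n : ℝ) * (z j : ℝ) / (N : ℝ))) / (Nat.factorial α : ℝ))) with hR
  suffices key : HasSum (fun k : S => F k) R from ⟨key.summable, key.tsum_eq⟩
  apply hasSum_subtype_of_complex_indicator
  have hn : ∀ n ∈ Finset.range N, HasSum
      (fun k : {j // j ∈ u} → ℤ => ∏ j, (1 / (k j : ℂ) ^ α *
        Complex.exp (2 * π * Complex.I * (k j * ((n : ℝ) * (z j.1 : ℝ) / (N : ℝ) : ℝ)))))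
      (∏ j : {j // j ∈ u}, (((-1 : ℝ) ^ (1 + α / 2) * (2 * π) ^ α *
        (bern α (Int.fract ((n : ℝ) * (z j.1 : ℝ) / (N : ℝ))) / (Nat.factorial α : ℝ)) : ℝ) : ℂ)) :=
    fun n _ => hasSum_pi_prod
      (fun (j : {j // j ∈ u}) (m : ℤ) => 1 / (m : ℂ) ^ α *
        Complex.exp (2 * π * Complex.I * (m * ((n : ℝ) * (z j.1 : ℝ) / (N : ℝ) : ℝ))))
      _ (fun j => (hasSum_bern α hα hαe _).summable.norm) (fun j => hasSum_bern α hα hαe _)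
  have hmain := (hasSum_sum hn).mul_left (1 / (N : ℂ))
  have hfun : ∀ k : {j // j ∈ u} → ℤ, ((S.indicator F k : ℝ) : ℂ) =
      1 / (N : ℂ) * ∑ n ∈ Finset.range N, ∏ j : {j // j ∈ u}, (1 / (k j : ℂ) ^ α *
        Complex.exp (2 * π * Complex.I * (k j * ((n : ℝ) * (z j.1 : ℝ) / (N : ℝ) : ℝ)))) := by
    intro k
    have hexp : ∀ n : ℕ, ∏ j : {j // j ∈ u}, (1 / (k j : ℂ) ^ α *
        Complex.exp (2 * π * Complex.I * (k j * ((n : ℝ) * (z j.1 : ℝ) / (N : ℝ) : ℝ)))) =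
        (F k : ℂ) * Complex.exp (2 * π * Complex.I *
          (n * ((∑ j ∈ u.attach, k j * z j.1 : ℤ) : ℂ) / N)) := by
      intro n
      rw [Finset.prod_mul_distrib, ← Complex.exp_sum, Finset.univ_eq_attach]
      congr 1
      · simp [hF]
      · congr 1
        push_cast
        rw [Finset.mul_sum, Finset.sum_div, Finset.mul_sum]
        exact Finset.sum_congr rfl fun j _ => by ring
    simp_rw [hexp]
    rw [← Finset.mul_sum, mul_left_comm, character_average N hN]
    by_cases h0 : ∀ j, k j ≠ 0
    · by_cases hd : (N : ℤ) ∣ ∑ j ∈ u.attach, k j * z j.1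
      · rw [Set.indicator_of_mem (show k ∈ S from ⟨h0, hd⟩), if_pos hd, mul_one]
      · rw [Set.indicator_of_notMem (fun h : k ∈ S => hd h.2), if_neg hd]
        simp
    · rw [Set.indicator_of_notMem (fun h : k ∈ S => h0 h.1)]
      push Not at h0
      obtain ⟨j, hj⟩ := h0
      -- the factor `1 / 0 ^ α` is the junk value `0`
      have hFk : F k = 0 :=
        Finset.prod_eq_zero (Finset.mem_attach u j) (by simp [hj, hα0])
      simp [hFk]
  have hval : (R : ℂ) = 1 / (N : ℂ) * ∑ n ∈ Finset.range N, ∏ j : {j // j ∈ u},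
      (((-1 : ℝ) ^ (1 + α / 2) * (2 * π) ^ α *
        (bern α (Int.fract ((n : ℝ) * (z j.1 : ℝ) / (N : ℝ))) / (Nat.factorial α : ℝ)) : ℝ) : ℂ) := by
    rw [hR, Complex.ofReal_mul, Complex.ofReal_sum]
    congr 1
    · simp
    · refine Finset.sum_congr rfl fun n _ => ?_
      rw [Finset.univ_eq_attach, Complex.ofReal_prod]
      exact (Finset.prod_attach u _).symm
  rw [hval, funext hfun]
  exact hmain
end

section
/- Let N be a prime, s a positive integer, γ_u ≥ 0 weights for u ⊆ {1,…,s}, and set γ'_u = γ_u·((58/3)/(4π⁴))^{|u|}. Then for every λ ∈ (1/2, 1] there exists a generating vector z ∈ {1,…,N−1}^s such that Σ_{∅≠u⊆{1,…,s}} (γ'_u)^{1/2} · Σ_{k∈P^{⊥,u}_{N,z}} Π_{j∈u} 1/k_j² ≤ (N−1)^{−1/λ} · ( Σ_{∅≠u⊆{1,…,s}} γ_u^{λ/2} · ( 2^{1−λ}·(58/3)^{λ/2}·ζ(2λ)/π^{2λ} )^{|u|} )^{1/λ}, where ζ denotes the Riemann zeta function. -/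
/-!
The bound is an averaging argument over all `z ∈ {1,…,N-1}^s`. By Jensen's inequality
`(∑ aᵢ)^λ ≤ ∑ aᵢ^λ` (`rpow_tsum_le`), the `λ`-th power of the left-hand side is at most
`∑_u (γ'_u)^{λ/2} ∑_k ∏_{j ∈ u} |k_j|^{-2λ}`, where `k` ranges over the `u`-part of the dual lattice
(`ofReal_dualSum_rpow_le`). So it suffices that, for each nonempty `u`, the mean over `z` of the
inner sum is at most `(2 ζ(2λ))^{|u|} / (N - 1)` (`sum_over_vectors`): some `z` is then at most as
bad as the mean, and the constants combine to those of the claim because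
`((58/3) / (4π⁴))^{λ/2} · 2 ζ(2λ) = 2^{1-λ} (58/3)^{λ/2} ζ(2λ) / π^{2λ}`.

For the mean, fix `i ∈ u` and all `k_j`, `z_j` with `j ≠ i`. The dual lattice condition becomes
`k_i z_i + R ≡ 0 (mod N)`, and summing `|k_i|^{-2λ}` over all solutions `(k_i, z_i)` gives at most
`2 ζ(2λ)`, whatever `R` is (`one_dim`); summing freely over the other `k_j`, `z_j` gives the bound.

The sums are handled in `ℝ≥0∞`, where no summability conditions are needed.
-/

open Real

/-- The Riemann zeta function for real arguments `x > 1`, as a Dirichlet series. -/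
noncomputable def zetaR (x : ℝ) : ℝ := ∑' n : ℕ+, 1 / ((n : ℕ) : ℝ) ^ x

open scoped ENNReal

/-- Jensen's inequality `(∑ aᵢ)^p ≤ ∑ aᵢ^p` for `0 < p ≤ 1`, for arbitrary sums. -/
theorem rpow_tsum_le {ι : Type*} (f : ι → ℝ≥0∞) {p : ℝ} (hp : 0 < p) (hp1 : p ≤ 1) :
    (∑' i, f i) ^ p ≤ ∑' i, f i ^ p := by
  have hfin : ∀ t : Finset ι, (∑ i ∈ t, f i) ^ p ≤ ∑ i ∈ t, f i ^ p := by
    classical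
    intro t
    induction t using Finset.induction_on with
    | empty => simp [hp]
    | insert a t ha ih =>
      rw [Finset.sum_insert ha, Finset.sum_insert ha]
      exact (ENNReal.rpow_add_le_add_rpow _ _ hp.le hp1).trans (by gcongr)
  have hlim : Filter.Tendsto (fun t : Finset ι => (∑ i ∈ t, f i) ^ p) Filter.atTop
      (nhds ((∑' i, f i) ^ p)) :=
    (ENNReal.continuous_rpow_const.tendsto _).comp ENNReal.summable.hasSum
  exact le_of_tendsto' hlim fun t => (hfin t).trans (ENNReal.sum_le_tsum t)

theorem tsum_funSplitAt {ι : Type} [DecidableEq ι] (i : ι) (F : (ι → ℤ) → ℝ≥0∞) :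
    ∑' k, F k = ∑' a, ∑' b, F ((Equiv.funSplitAt i ℤ).symm (a, b)) := by
  rw [← (Equiv.funSplitAt i ℤ).symm.tsum_eq F]
  exact ENNReal.tsum_prod'

/-- A sum of product weights over `ℤ^ι` factorizes. -/
theorem tsum_pi_prod (w : ℤ → ℝ≥0∞) (n : ℕ) :
    ∀ (ι : Type) [Fintype ι] [DecidableEq ι], Fintype.card ι = n →
      ∑' k : ι → ℤ, ∏ j, w (k j) = (∑' k, w k) ^ n := by
  induction n with
  | zero =>
    intro ι _ _ h
    have := Fintype.card_eq_zero_iff.1 h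
    simp [tsum_fintype]
  | succ n ih =>
    intro ι _ _ h
    obtain ⟨i⟩ : Nonempty ι := Fintype.card_pos_iff.1 (by omega)
    rw [tsum_funSplitAt i, pow_succ', ← ENNReal.tsum_mul_right]
    refine tsum_congr fun a => ?_
    have hc : Fintype.card {j // j ≠ i} = n := by
      rw [Fintype.card_subtype_compl]; simp [h]
    rw [← ih _ hc, ← ENNReal.tsum_mul_left]
    refine tsum_congr fun b => ?_
    rw [Fintype.prod_eq_mul_prod_subtype_ne _ i]
    simp [Equiv.funSplitAt, Equiv.piSplitAt]
    congr 1
    exact Finset.prod_congr rfl fun j _ => by simp [j.2]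

/-- The weight `k ↦ |k|^{-2λ}`, written as the `λ`-th power of `1 / k ^ 2`. For `λ > 0` it vanishes at
`k = 0`, so sums over all of `ℤ` are sums over `k ≠ 0`. -/
noncomputable def wt (lam : ℝ) (k : ℤ) : ℝ≥0∞ := ENNReal.ofReal (1 / (k : ℝ) ^ 2) ^ lam

theorem wt_zero {lam : ℝ} (h : 0 < lam) : wt lam 0 = 0 := by simp [wt, h]

theorem wt_mul (lam : ℝ) (h : 0 < lam) (a b : ℤ) : wt lam (a * b) = wt lam a * wt lam b := by
  rw [wt, wt, wt, ← ENNReal.mul_rpow_of_nonneg _ _ h.le, ← ENNReal.ofReal_mul (by positivity)]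
  congr 2
  push_cast
  rw [mul_pow, one_div_mul_one_div]

theorem tsum_wt {lam : ℝ} (h1 : 1 / 2 < lam) :
    ∑' k : ℤ, wt lam k = ENNReal.ofReal (2 * zetaR (2 * lam)) := by
  have h0 : 0 < lam := by linarith
  have hs : Summable (fun n : ℕ => 1 / (n : ℝ) ^ (2 * lam)) :=
    Real.summable_one_div_nat_rpow.2 (by linarith)
  have key : ∀ n : ℕ, wt lam (n : ℤ) = ENNReal.ofReal (1 / (n : ℝ) ^ (2 * lam)) := by
    intro n
    rw [wt, ENNReal.ofReal_rpow_of_nonneg (by positivity) h0.le]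
    congr 1
    rw [Real.div_rpow (by simp) (by positivity), Real.one_rpow, Int.cast_natCast,
      ← Real.rpow_natCast, ← Real.rpow_mul (by positivity)]
    norm_num
  have hneg : ∀ k, wt lam (-k) = wt lam k := by intro k; simp [wt]
  have hz : zetaR (2 * lam) = ∑' n : ℕ, 1 / ((n + 1 : ℕ) : ℝ) ^ (2 * lam) := by
    rw [zetaR]
    exact tsum_pnat_eq_tsum_succ (f := fun n : ℕ => 1 / (n : ℝ) ^ (2 * lam))
  have hE : ∑' n : ℕ, wt lam ((n : ℤ) + 1) = ENNReal.ofReal (zetaR (2 * lam)) := by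
    rw [hz, ENNReal.ofReal_tsum_of_nonneg (fun n => by positivity) ((summable_nat_add_iff 1).2 hs)]
    refine tsum_congr fun n => ?_
    rw [← key]; push_cast; rfl
  rw [tsum_of_nat_of_neg_add_one ENNReal.summable ENNReal.summable]
  simp only [hneg]
  rw [tsum_eq_zero_add' ENNReal.summable]
  simp only [Nat.cast_zero, wt_zero h0, zero_add, Nat.cast_add, Nat.cast_one]
  have hζ : 0 ≤ zetaR (2 * lam) := tsum_nonneg fun n => by positivity
  rw [hE, ← ENNReal.ofReal_add hζ hζ, ← two_mul]

/-- The one-dimensional averaging estimate: for every residue `R`, summing the weights of the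
solutions of `k z + R ≡ 0 (mod N)` over all `k` and all `z ∈ {1,…,N-1}` costs at most the full
weight `∑ w(k)`.  If `N ∤ R` every `k` has at most one solution `z`; if `N ∣ R` only the multiples
of `N` contribute, and their total weight `N^{-2λ} ∑ w(k)` compensates the factor `N - 1`. -/
theorem one_dim (N : ℕ) (hN : N.Prime) {lam : ℝ} (h1 : 1 / 2 < lam) (R : ℤ) :
    ∑ z ∈ Finset.Icc (1 : ℤ) (N - 1), ∑' k : ℤ, (if (N : ℤ) ∣ k * z + R then wt lam k else 0)
      ≤ ∑' k : ℤ, wt lam k := by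
  have h0 : 0 < lam := by linarith
  have hNp : Prime (N : ℤ) := Nat.prime_iff_prime_int.1 hN
  have hN2 := hN.two_le
  have hz : ∀ z ∈ Finset.Icc (1 : ℤ) (N - 1), ¬ (N : ℤ) ∣ z := by
    intro z hz hd
    rw [Finset.mem_Icc] at hz
    have := Int.le_of_dvd (by omega) hd
    omega
  by_cases hR : (N : ℤ) ∣ R
  · have hinner : ∀ z ∈ Finset.Icc (1 : ℤ) (N - 1),
        ∑' k : ℤ, (if (N : ℤ) ∣ k * z + R then wt lam k else 0)
          = wt lam N * ∑' k : ℤ, wt lam k := by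
      intro z hzm
      have hiff : ∀ k : ℤ, (N : ℤ) ∣ k * z + R ↔ (N : ℤ) ∣ k := by
        intro k
        rw [dvd_add_left hR, hNp.dvd_mul]
        simp [hz z hzm]
      simp only [hiff]
      rw [← ENNReal.tsum_mul_left]
      have hinj : Function.Injective (fun k : ℤ => (N : ℤ) * k) :=
        mul_right_injective₀ hNp.ne_zero
      rw [← hinj.tsum_eq]
      · refine tsum_congr fun k => ?_
        simp [wt_mul lam h0]
      · intro k hk
        simp only [Function.mem_support, ne_eq, ite_eq_right_iff, Classical.not_imp] at hk
        obtain ⟨c, rfl⟩ := hk.1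
        exact ⟨c, rfl⟩
    rw [Finset.sum_congr rfl hinner, Finset.sum_const, Int.card_Icc, nsmul_eq_mul, ← mul_assoc]
    refine mul_le_of_le_one_left (zero_le) ?_
    have hNR : (2 : ℝ) ≤ N := by exact_mod_cast hN2
    have hc : (((N : ℤ) - 1 + 1 - 1).toNat : ℝ≥0∞) ≤ ENNReal.ofReal N := by
      rw [ENNReal.ofReal_natCast]
      exact_mod_cast (by omega : ((N : ℤ) - 1 + 1 - 1).toNat ≤ N)
    have hw : wt lam N ≤ ENNReal.ofReal (1 / N) := by
      rw [wt, ENNReal.ofReal_rpow_of_nonneg (by positivity) h0.le]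
      apply ENNReal.ofReal_le_ofReal
      rw [Real.div_rpow (by simp) (by positivity), Real.one_rpow, Int.cast_natCast,
        ← Real.rpow_natCast, ← Real.rpow_mul (by positivity)]
      apply one_div_le_one_div_of_le (by linarith)
      calc (N : ℝ) = (N : ℝ) ^ (1 : ℝ) := (Real.rpow_one _).symm
        _ ≤ _ := Real.rpow_le_rpow_of_exponent_le (by linarith) (by push_cast; linarith)
    refine (mul_le_mul' hc hw).trans ?_
    rw [← ENNReal.ofReal_mul (by positivity), mul_one_div_cancel (by positivity)]
    simp
  · rw [← Summable.tsum_finsetSum (fun _ _ => ENNReal.summable)]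
    refine ENNReal.tsum_le_tsum fun k => ?_
    rw [← Finset.sum_filter, Finset.sum_const, nsmul_eq_mul]
    refine mul_le_of_le_one_left (zero_le) ?_
    have : (Finset.filter (fun z => (N : ℤ) ∣ k * z + R) (Finset.Icc (1 : ℤ) (N - 1))).card ≤ 1 := by
      rw [Finset.card_le_one]
      intro a ha b hb
      simp only [Finset.mem_filter, Finset.mem_Icc] at ha hb
      have hd : (N : ℤ) ∣ k * (a - b) := by
        have := dvd_sub ha.2 hb.2
        rwa [add_sub_add_right_eq_sub, ← mul_sub] at this
      rcases hNp.dvd_or_dvd hd with h | h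
      · exact absurd ((dvd_add_right (h.mul_right a)).1 ha.2) hR
      · have := Int.eq_zero_of_abs_lt_dvd h (by rw [abs_lt]; constructor <;> omega)
        omega
    exact_mod_cast this

/-- Averaging over all generating vectors: summing the `λ`-weights of the dual lattice over all
`z ∈ {1,…,N-1}^s` saves a factor `N - 1` against the number of vectors. -/
theorem sum_over_vectors (N : ℕ) (hN : N.Prime) {lam : ℝ} (h1 : 1 / 2 < lam) {s : ℕ}
    (u : Finset (Fin s)) (hu : u.Nonempty) :
    ∑ z : Fin s → Finset.Icc (1 : ℤ) (N - 1), ∑' k : {j // j ∈ u} → ℤ,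
      (if (N : ℤ) ∣ ∑ j, k j * (z j.1 : ℤ) then ∏ j, wt lam (k j) else 0)
      ≤ ((N - 1 : ℕ) : ℝ≥0∞) ^ (s - 1) * (∑' k : ℤ, wt lam k) ^ u.card := by
  obtain ⟨i, hi⟩ := hu
  let iu : {j // j ∈ u} := ⟨i, hi⟩
  have hcard : u.card = Fintype.card {j : {j // j ∈ u} // j ≠ iu} + 1 := by
    rw [Fintype.card_subtype_compl]
    have := Finset.card_pos.2 ⟨i, hi⟩
    simp
    omega
  rw [← (Equiv.funSplitAt i (Finset.Icc (1 : ℤ) (N - 1))).symm.sum_comp, Fintype.sum_prod_type,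
    Finset.sum_comm]
  have hvec : ∀ zr : {j // j ≠ i} → Finset.Icc (1 : ℤ) (N - 1),
      (∑ z0 : Finset.Icc (1 : ℤ) (N - 1), ∑' k : {j // j ∈ u} → ℤ,
        (if (N : ℤ) ∣ ∑ j, k j *
            ((Equiv.funSplitAt i (Finset.Icc (1 : ℤ) (N - 1))).symm (z0, zr) j.1 : ℤ)
          then ∏ j, wt lam (k j) else 0)) ≤ (∑' k : ℤ, wt lam k) ^ u.card := by
    intro zr
    -- `R kr` is the part of the congruence that involves neither `k i` nor `z i`.
    let R : ({j // j ≠ iu} → ℤ) → ℤ := fun kr =>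
      ∑ j, kr j * (zr ⟨j.1.1, fun h => j.2 (Subtype.ext h)⟩ : ℤ)
    have hsplit : ∀ z0 : Finset.Icc (1 : ℤ) (N - 1), (∑' k : {j // j ∈ u} → ℤ,
        (if (N : ℤ) ∣ ∑ j, k j *
            ((Equiv.funSplitAt i (Finset.Icc (1 : ℤ) (N - 1))).symm (z0, zr) j.1 : ℤ)
          then ∏ j, wt lam (k j) else 0)) =
        ∑' kr : {j // j ≠ iu} → ℤ, ∑' k0 : ℤ,
          (∏ j, wt lam (kr j)) * (if (N : ℤ) ∣ k0 * z0 + R kr then wt lam k0 else 0) := by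
      intro z0
      rw [tsum_funSplitAt iu, ENNReal.tsum_comm]
      refine tsum_congr fun kr => tsum_congr fun k0 => ?_
      rw [Fintype.prod_eq_mul_prod_subtype_ne _ iu, Fintype.sum_eq_add_sum_subtype_ne _ iu]
      have e1 : (Equiv.funSplitAt iu ℤ).symm (k0, kr) iu = k0 := by
        simp [Equiv.funSplitAt, Equiv.piSplitAt]
      have e2 : ∀ j : {j // j ≠ iu}, (Equiv.funSplitAt iu ℤ).symm (k0, kr) j.1 = kr j := by
        intro j
        simp [Equiv.funSplitAt, Equiv.piSplitAt, j.2]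
      have e3 : (Equiv.funSplitAt i (Finset.Icc (1 : ℤ) (N - 1))).symm (z0, zr) iu.1 = z0 := by
        simp [Equiv.funSplitAt, Equiv.piSplitAt, iu]
      have e4 : ∀ j : {j // j ≠ iu},
          (Equiv.funSplitAt i (Finset.Icc (1 : ℤ) (N - 1))).symm (z0, zr) j.1.1
            = zr ⟨j.1.1, fun h => j.2 (Subtype.ext h)⟩ := by
        intro j
        have : j.1.1 ≠ i := fun h => j.2 (Subtype.ext h)
        simp [Equiv.funSplitAt, Equiv.piSplitAt, this]
      simp only [e1, e2, e3, e4]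
      rw [mul_ite, mul_zero, mul_comm (wt lam k0)]
    simp only [hsplit, ENNReal.tsum_mul_left]
    rw [← Summable.tsum_finsetSum (fun _ _ => ENNReal.summable), hcard, pow_succ,
      ← tsum_pi_prod (wt lam) _ _ rfl, ← ENNReal.tsum_mul_right]
    refine ENNReal.tsum_le_tsum fun kr => ?_
    rw [← Finset.mul_sum]
    refine mul_le_mul_right ?_ _
    rw [Finset.sum_coe_sort (Finset.Icc (1 : ℤ) (N - 1)) (fun z =>
      ∑' k : ℤ, (if (N : ℤ) ∣ k * z + R kr then wt lam k else 0))]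
    exact one_dim N hN h1 _
  refine (Finset.sum_le_sum fun zr _ => hvec zr).trans (le_of_eq ?_)
  rw [Finset.sum_const, nsmul_eq_mul, Finset.card_univ, Fintype.card_fun,
    Fintype.card_subtype_compl]
  simp

/-- The dual lattice sum, raised to the power `λ`, is controlled by the `λ`-weights. The sum on
the right also ranges over `k` with zero entries, which have weight zero. -/
theorem ofReal_dualSum_rpow_le (N : ℕ) {lam : ℝ} (h0 : 0 < lam) (h2 : lam ≤ 1) {s : ℕ}
    (z : Fin s → ℤ) (u : Finset (Fin s)) :
    ENNReal.ofReal (dualSum N z u 2) ^ lam ≤ ∑' k : {j // j ∈ u} → ℤ,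
      (if (N : ℤ) ∣ ∑ j, k j * z j.1 then ∏ j, wt lam (k j) else 0) := by
  let P : ({j // j ∈ u} → ℤ) → Prop := fun k =>
    (∀ j, k j ≠ 0) ∧ ((N : ℤ) ∣ ∑ j ∈ u.attach, k j * z j.1)
  let f : {k // P k} → ℝ := fun k => ∏ j ∈ u.attach, (1 : ℝ) / ((k.1 j : ℝ)) ^ 2
  have hf : ∀ k, 0 ≤ f k := fun k => Finset.prod_nonneg fun j _ => by positivity
  have hle : ENNReal.ofReal (dualSum N z u 2) ≤ ∑' k, ENNReal.ofReal (f k) := by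
    change ENNReal.ofReal (∑' k, f k) ≤ _
    by_cases hs : Summable f
    · rw [ENNReal.ofReal_tsum_of_nonneg hf hs]
    · simp [tsum_eq_zero_of_not_summable hs]
  calc _ ≤ (∑' k, ENNReal.ofReal (f k)) ^ lam := ENNReal.rpow_le_rpow hle h0.le
    _ ≤ ∑' k, ENNReal.ofReal (f k) ^ lam := rpow_tsum_le _ h0 h2
    _ = ∑' k : {k // P k}, (fun k : {j // j ∈ u} → ℤ =>
        (if (N : ℤ) ∣ ∑ j, k j * z j.1 then ∏ j, wt lam (k j) else 0)) k.1 := by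
      refine tsum_congr fun k => ?_
      have hd : (N : ℤ) ∣ ∑ j, k.1 j * z j.1 := k.2.2
      beta_reduce
      rw [if_pos hd]
      simp only [f, wt, Finset.univ_eq_attach]
      rw [ENNReal.ofReal_prod_of_nonneg (fun j _ => by positivity),
        ENNReal.prod_rpow_of_nonneg h0.le]
    _ ≤ _ := ENNReal.tsum_comp_le_tsum_of_injective Subtype.val_injective _


theorem stmt12 (N : ℕ) (hN : N.Prime) (s : ℕ) (hs : 0 < s)
    (γ : Finset (Fin s) → ℝ) (hγ : ∀ u : Finset (Fin s), 0 ≤ γ u)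
    (lam : ℝ) (hlam1 : 1 / 2 < lam) (hlam2 : lam ≤ 1) :
    ∃ z : Fin s → ℤ, (∀ j, 1 ≤ z j ∧ z j ≤ (N : ℤ) - 1) ∧
      (∑ u ∈ Finset.univ.filter (fun u : Finset (Fin s) => u.Nonempty),
          Real.sqrt (γ u * ((58 / 3) / (4 * π ^ 4)) ^ u.card) * dualSum N z u 2)
        ≤ ((N : ℝ) - 1) ^ (-(1 / lam)) *
          (∑ u ∈ Finset.univ.filter (fun u : Finset (Fin s) => u.Nonempty),
            γ u ^ (lam / 2) *
              ((2 : ℝ) ^ (1 - lam) * ((58 : ℝ) / 3) ^ (lam / 2) * zetaR (2 * lam) /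
                π ^ (2 * lam)) ^ u.card) ^ (1 / lam) := by
  have h0 : 0 < lam := by linarith
  have hζ : 0 ≤ zetaR (2 * lam) := tsum_nonneg fun n => by positivity
  have hN2 := hN.two_le
  have hN1 : (0 : ℝ) < (N : ℝ) - 1 := by
    have : (2 : ℝ) ≤ N := by exact_mod_cast hN2
    linarith
  have hcast : ((N - 1 : ℕ) : ℝ≥0∞) = ENNReal.ofReal ((N : ℝ) - 1) := by
    rw [← ENNReal.ofReal_natCast, Nat.cast_sub (by omega)]; simp
  set U := Finset.univ.filter (fun u : Finset (Fin s) => u.Nonempty) with hU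
  set c : Finset (Fin s) → ℝ := fun u => Real.sqrt (γ u * ((58 / 3) / (4 * π ^ 4)) ^ u.card)
    with hc
  set B : Finset (Fin s) → ℝ := fun u => γ u ^ (lam / 2) *
    ((2 : ℝ) ^ (1 - lam) * ((58 : ℝ) / 3) ^ (lam / 2) * zetaR (2 * lam) / π ^ (2 * lam)) ^ u.card
    with hB
  have hBnn : ∀ u, 0 ≤ B u := fun u => mul_nonneg (Real.rpow_nonneg (hγ u) _) (by positivity)
  have hcB : ∀ u, ENNReal.ofReal (c u) ^ lam * ENNReal.ofReal (2 * zetaR (2 * lam)) ^ u.card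
      = ENNReal.ofReal (B u) := by
    intro u
    rw [ENNReal.ofReal_rpow_of_nonneg (Real.sqrt_nonneg _) h0.le,
      ← ENNReal.ofReal_pow (by positivity), ← ENNReal.ofReal_mul (by positivity)]
    congr 1
    simp only [hB]
    rw [Real.sqrt_eq_rpow, ← Real.rpow_mul (mul_nonneg (hγ u) (by positivity)),
      Real.mul_rpow (hγ u) (by positivity), mul_assoc, show 1 / 2 * lam = lam / 2 by ring]
    congr 1
    rw [← Real.rpow_natCast, ← Real.rpow_mul (by positivity), mul_comm (u.card : ℝ),
      Real.rpow_mul (by positivity), Real.rpow_natCast, ← mul_pow]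
    congr 1
    have e4 : (4 * π ^ 4 : ℝ) ^ (lam / 2) = 2 ^ lam * π ^ (2 * lam) := by
      rw [Real.mul_rpow (by positivity) (by positivity), show (4 : ℝ) = 2 ^ (2 : ℝ) by norm_num,
        ← Real.rpow_natCast π 4, ← Real.rpow_mul (by positivity), ← Real.rpow_mul pi_nonneg]
      congr 2
      · ring
      · push_cast; ring
    rw [Real.div_rpow (by positivity) (by positivity), e4, Real.rpow_sub (by norm_num),
      Real.rpow_one]
    field_simp
  let A := Finset.Icc (1 : ℤ) ((N : ℤ) - 1)
  let T : (Fin s → A) → Finset (Fin s) → ℝ≥0∞ := fun z u => ∑' k : {j // j ∈ u} → ℤ,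
      (if (N : ℤ) ∣ ∑ j, k j * (z j.1 : ℤ) then ∏ j, wt lam (k j) else 0)
  have hone : (1 : ℤ) ∈ A := by simp only [A, Finset.mem_Icc]; omega
  have hcardA : Fintype.card (Fin s → A) = (N - 1) ^ s := by
    simp [A]
  -- The mean over all `z` of the `λ`-weighted error is at most `(N - 1)⁻¹ ∑ B u`.
  have hsum : ∑ z : Fin s → A, ∑ u ∈ U, ENNReal.ofReal (c u) ^ lam * T z u
      ≤ ∑ _z : Fin s → A, (ENNReal.ofReal ((N : ℝ) - 1))⁻¹ * ENNReal.ofReal (∑ u ∈ U, B u) := by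
    rw [Finset.sum_const, Finset.card_univ, hcardA, nsmul_eq_mul, Finset.sum_comm,
      ENNReal.ofReal_sum_of_nonneg (fun u _ => hBnn u), Finset.mul_sum, Finset.mul_sum]
    refine Finset.sum_le_sum fun u hu => ?_
    rw [← Finset.mul_sum, ← hcB u]
    have := sum_over_vectors N hN hlam1 u (Finset.mem_filter.1 hu).2
    rw [tsum_wt hlam1] at this
    refine (mul_le_mul_right this _).trans (le_of_eq ?_)
    have hne : ENNReal.ofReal ((N : ℝ) - 1) ≠ 0 := by simpa using hN1
    obtain ⟨t, rfl⟩ : ∃ t, s = t + 1 := ⟨s - 1, by omega⟩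
    push_cast [hcast]
    rw [pow_succ, mul_assoc (_ ^ t), ← mul_assoc _ _⁻¹,
      ENNReal.mul_inv_cancel hne ENNReal.ofReal_ne_top]
    ring
  obtain ⟨z, -, hz⟩ := ENNReal.exists_le_of_sum_le ⟨fun _ => ⟨1, hone⟩, Finset.mem_univ _⟩ hsum
  refine ⟨fun j => z j, fun j => Finset.mem_Icc.1 (z j).2, ?_⟩
  have hBs : 0 ≤ ∑ u ∈ U, B u := Finset.sum_nonneg fun u _ => hBnn u
  have hdual : ∀ u, 0 ≤ dualSum N (fun j => (z j : ℤ)) u 2 := fun u =>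
    tsum_nonneg fun k => Finset.prod_nonneg fun j _ => by positivity
  have hL : 0 ≤ ∑ u ∈ U, c u * dualSum N (fun j => (z j : ℤ)) u 2 :=
    Finset.sum_nonneg fun u _ => mul_nonneg (Real.sqrt_nonneg _) (hdual u)
  have hpow : (∑ u ∈ U, c u * dualSum N (fun j => (z j : ℤ)) u 2) ^ lam
      ≤ ((N : ℝ) - 1)⁻¹ * ∑ u ∈ U, B u := by
    rw [← ENNReal.ofReal_le_ofReal_iff (by positivity), ENNReal.ofReal_mul (by positivity),
      ENNReal.ofReal_inv_of_pos hN1, ← ENNReal.ofReal_rpow_of_nonneg hL h0.le]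
    refine le_trans ?_ hz
    rw [ENNReal.ofReal_sum_of_nonneg
      (fun u _ => mul_nonneg (Real.sqrt_nonneg _) (hdual u)), ← Finset.tsum_subtype,
      ← Finset.tsum_subtype]
    refine (rpow_tsum_le _ h0 hlam2).trans (ENNReal.tsum_le_tsum fun u => ?_)
    rw [ENNReal.ofReal_mul (Real.sqrt_nonneg _), ENNReal.mul_rpow_of_nonneg _ _ h0.le]
    exact mul_le_mul_right (ofReal_dualSum_rpow_le N h0 hlam2 _ _) _
  calc _ = ((∑ u ∈ U, c u * dualSum N (fun j => (z j : ℤ)) u 2) ^ lam) ^ (1 / lam) := by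
        rw [← Real.rpow_mul hL, mul_one_div_cancel h0.ne', Real.rpow_one]
    _ ≤ (((N : ℝ) - 1)⁻¹ * ∑ u ∈ U, B u) ^ (1 / lam) :=
        Real.rpow_le_rpow (by positivity) hpow (by positivity)
    _ = _ := by
        rw [Real.mul_rpow (by positivity) hBs, Real.inv_rpow hN1.le, Real.rpow_neg hN1.le]
end
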